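/- Let −π/2 ≤ a < b ≤ π/2 and let GP_{a,b} = { w ∈ E : w is a prime element of the ring ℤ[i] of Gaussian integers and the principal argument arg(w) lies in [a,b) }. If I ⊆ GP_{a,b} with GP_{a,b} ∖ I finite, then closure(J_I) is not porous in ℂ; in particular, the limit set J_I is not porous. -/

import Mathlib

/-!
Two facts collide: porosity of the limit set makes the alphabet sparse, while the Gaussian primes of
a sector are not sparse. Both are measured by the sum `∑ ‖x‖⁻²`.

*Porosity implies convergence.* Let `J` contain the limit set of `I`. For a letter `w₀ ∈ I` with
`‖w₀‖ ≥ 3` the constant word converges to some `y` with `‖y‖ ≤ 1`, so `J ∋ 1 / (w + y)` for every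
`w ∈ I`. Near `1 / (w + y)`, inversion distorts distances by a factor comparable to `‖w‖²`, so holes
of `J` there become holes of `I` near `w`, of size proportional to any scale `ρ ≤ ‖w‖ / 10`
(`hasHoles_of_porous`). Hence, splitting a square far from the origin into `m²` subsquares, one of
them always misses `I`; iterating, a square of side `m^j` has at most `(m² - 1)^j` points of `I`
(`box_count`), and summing over annuli gives `∑_{w ∈ I} ‖w‖⁻² < ∞` (`summable_of_hasHoles`).

*Primes in sectors diverge.* With `ψ(z) = (z/|z|)^4`, let `L_k(s) = ∑ ψ(x)^k ‖x‖^{-2s}` over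
`ℤ[i]`. No functional equation is needed near `s = 1`: splitting the sum into the five residue
classes modulo `β = 2 + i` and comparing each with the class of `0` shows that
`L_k(s) (1 - 5 ψ(β)^k 5^{-s})` is given by a series holomorphic around `1` (`heckeL_eq`). For `k ≠ 0`
the factor is nonzero at `1`, because `arg β` is not a rational multiple of `π`, so `L_k` extends
across `1`; for `k = 0` it has at most a simple pole. The Euler product and the inequality
`3 + 4 cos θ + cos 2θ ≥ 0` then show that `∑_p Re ψ(p)^k ‖p‖^{-2s}` stays bounded as `s ↓ 1` for
`k ≠ 0` (`primeSum_bdd`), while it is unbounded for `k = 0`. Testing against the Fejér-like kernel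
`|1 + ψ(p) w̄|^{2n}`, whose mean value `(2n choose n)` beats its size away from `w`, gives divergence
of `∑ ‖p‖⁻²` over the primes with `ψ(p)` near `w` or `w̄`; rotating by units and reflecting yields the
same for primes in any sector (`not_summable_sector`).
-/

open Metric Set Filter

/-- `por A x r` is the porosity of the set `A` at the point `x` at scale `r`:
the supremum of all `c ≥ 0` such that some open ball of radius `c·r` is contained
in `B(x,r) ∖ A`. -/
noncomputable def por {X : Type*} [MetricSpace X] (A : Set X) (x : X) (r : ℝ) : ℝ :=
  sSup {c : ℝ | 0 ≤ c ∧ ∃ y : X, Metric.ball y (c * r) ⊆ Metric.ball x r \ A}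

/-- `A` is porous at the point `x`. -/
def PorousAt {X : Type*} [MetricSpace X] (A : Set X) (x : X) : Prop :=
  ∃ c ∈ Set.Ioo (0 : ℝ) 1, ∃ r₀ > (0 : ℝ), ∀ r ∈ Set.Ioo (0 : ℝ) r₀, c ≤ por A x r

/-- `A` is porous. -/
def Porous {X : Type*} [MetricSpace X] (A : Set X) : Prop :=
  ∃ c ∈ Set.Ioo (0 : ℝ) 1, ∃ r₀ > (0 : ℝ), ∀ x ∈ A, ∀ r ∈ Set.Ioo (0 : ℝ) r₀, c ≤ por A x r

/-- The Gaussian integers with positive real part, as a subset of `ℂ`. -/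
def Egauss : Set ℂ :=
  {w | ∃ m n : ℤ, 1 ≤ m ∧ w = (m : ℂ) + (n : ℂ) * Complex.I}

/-- The composition `φ_{ω₀} ∘ ⋯ ∘ φ_{ω_{m-1}}` of the continued fraction maps
`φ_e z = 1/(e+z)`. -/
noncomputable def cfComp (ω : ℕ → ℂ) (m : ℕ) : ℂ → ℂ :=
  (List.ofFn fun i : Fin m => ω i).foldr (fun e g => (fun z => (e + z)⁻¹) ∘ g) id

/-- The limit set of the complex continued fraction system with alphabet `I ⊆ ℂ`. -/
def cfLimitSet (I : Set ℂ) : Set ℂ :=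
  {z | ∃ ω : ℕ → ℂ, (∀ k, ω k ∈ I) ∧
    Filter.Tendsto (fun m => cfComp ω m 0) Filter.atTop (nhds z)}

/-- The radial sector of Gaussian primes: elements of `E` that are prime in `ℤ[i]`
and whose principal argument lies in `[a,b)`. -/
def GPsector (a b : ℝ) : Set ℂ :=
  {w | ∃ m n : ℤ, 1 ≤ m ∧ w = (m : ℂ) + (n : ℂ) * Complex.I ∧
    Prime (⟨m, n⟩ : GaussianInt) ∧ Complex.arg w ∈ Set.Ico a b}

namespace GaussCF

open Complex Topology

/-! ### Hecke characters of `ℤ[i]` -/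

/-- The value at `z` of the Hecke character `(z/|z|)^{4k} |z|^{-2s}`; it vanishes at `z = 0`
as soon as `s ≠ 0`, thanks to `0 ^ w = 0` for `w ≠ 0`. -/
noncomputable def hecke (k : ℕ) (s : ℂ) (z : ℂ) : ℂ :=
  ((z / ‖z‖) ^ 4) ^ k * (‖z‖ : ℂ) ^ (-2 * s)

lemma hecke_mul (k : ℕ) (s z w : ℂ) : hecke k s (z * w) = hecke k s z * hecke k s w := by
  unfold hecke
  rw [norm_mul, ofReal_mul, mul_cpow_ofReal_nonneg (norm_nonneg _) (norm_nonneg _),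
    mul_div_mul_comm, mul_pow, mul_pow]
  ring

lemma hecke_zero (k : ℕ) {s : ℂ} (hs : 0 < s.re) : hecke k s 0 = 0 := by
  have : s ≠ 0 := by rintro rfl; simp at hs
  simp [hecke, this]

lemma norm_hecke (k : ℕ) (s : ℂ) {z : ℂ} (hz : z ≠ 0) :
    ‖hecke k s z‖ = ‖z‖ ^ (-2 * s.re) := by
  have h0 : 0 < ‖z‖ := norm_pos_iff.2 hz
  unfold hecke
  rw [norm_mul, norm_cpow_eq_rpow_re_of_pos h0]
  simp [h0.ne']

lemma norm_hecke_le (k : ℕ) {s : ℂ} (hs : 0 < s.re) (z : ℂ) :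
    ‖hecke k s z‖ ≤ ‖z‖ ^ (-2 * s.re) := by
  rcases eq_or_ne z 0 with rfl | hz
  · rw [hecke_zero k hs]; simp; positivity
  · exact (norm_hecke k s hz).le

lemma one_le_norm {x : GaussianInt} (hx : x ≠ 0) : 1 ≤ ‖(x : ℂ)‖ := by
  have h1 : (1 : ℤ) ≤ x.norm := GaussianInt.norm_pos.2 hx
  have h2 : (1 : ℝ) ≤ normSq (x : ℂ) := by
    rw [← GaussianInt.intCast_real_norm]; exact_mod_cast h1
  rw [normSq_eq_norm_sq] at h2
  nlinarith [norm_nonneg (x : ℂ)]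

lemma summable_norm_rpow {r : ℝ} (hr : 2 < r) :
    Summable fun x : GaussianInt => ‖(x : ℂ)‖ ^ (-r) := by
  have h := EisensteinSeries.summable_one_div_norm_rpow hr
  have hinj : Function.Injective (fun x : GaussianInt => ![x.re, x.im]) := by
    intro x y hxy
    have h0 := congrFun hxy 0
    have h1 := congrFun hxy 1
    exact Zsqrtd.ext h0 h1
  refine Summable.of_nonneg_of_le (fun x => by positivity) (fun x => ?_) (h.comp_injective hinj)
  rcases eq_or_ne x 0 with rfl | hx
  · simp [Real.zero_rpow (by linarith : -r ≠ 0)]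
    positivity
  have hpos : 0 < ‖(![x.re, x.im] : Fin 2 → ℤ)‖ := by
    rw [norm_pos_iff]
    intro h0
    exact hx (Zsqrtd.ext (congrFun h0 0) (congrFun h0 1))
  refine Real.rpow_le_rpow_of_nonpos hpos ?_ (by linarith)
  rw [pi_norm_le_iff_of_nonneg (norm_nonneg _)]
  intro i
  fin_cases i
  · simpa [Int.norm_eq_abs, GaussianInt.intCast_re] using abs_re_le_norm (x : ℂ)
  · simpa [Int.norm_eq_abs, GaussianInt.intCast_im] using abs_im_le_norm (x : ℂ)

lemma summable_hecke_norm (k : ℕ) {s : ℂ} (hs : 1 < s.re) :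
    Summable fun x : GaussianInt => ‖hecke k s (x : ℂ)‖ := by
  refine Summable.of_nonneg_of_le (fun x => norm_nonneg _)
    (fun x => norm_hecke_le k (by linarith) _) ?_
  have := summable_norm_rpow (r := 2 * s.re) (by linarith)
  simpa [neg_mul] using this

lemma summable_hecke (k : ℕ) {s : ℂ} (hs : 1 < s.re) :
    Summable fun x : GaussianInt => hecke k s (x : ℂ) := (summable_hecke_norm k hs).of_norm

lemma norm_pow_sub_pow_le' {z w : ℂ} (hz : ‖z‖ ≤ 1) (hw : ‖w‖ ≤ 1) (n : ℕ) :
    ‖z ^ n - w ^ n‖ ≤ n * ‖z - w‖ := by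
  induction n with
  | zero => simp
  | succ n ih =>
    have : z ^ (n + 1) - w ^ (n + 1) = z ^ n * (z - w) + (z ^ n - w ^ n) * w := by ring
    rw [this]
    refine (norm_add_le _ _).trans ?_
    rw [norm_mul, norm_mul, norm_pow]
    have h1 : ‖z‖ ^ n ≤ 1 := pow_le_one₀ (norm_nonneg _) hz
    push_cast
    nlinarith [norm_nonneg (z - w), norm_nonneg (z ^ n - w ^ n), norm_nonneg w]

lemma norm_div_norm_sub_le {z w : ℂ} (hz : z ≠ 0) :
    ‖w / ‖w‖ - z / ‖z‖‖ ≤ 2 * ‖z - w‖ / ‖z‖ := by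
  have h0 : 0 < ‖z‖ := norm_pos_iff.2 hz
  rw [le_div_iff₀ h0]
  have hz' : (‖z‖ : ℂ) ≠ 0 := by exact_mod_cast h0.ne'
  have e : ‖w / ‖w‖ - z / ‖z‖‖ * ‖z‖ = ‖(w / ‖w‖) * ‖z‖ - z‖ := by
    conv_lhs => rw [← norm_norm z, ← Complex.norm_real ‖z‖]
    rw [← norm_mul, sub_mul]
    simp [hz']
  rw [e]
  rcases eq_or_ne w 0 with rfl | hw
  · simp; linarith
  have hw0 : (‖w‖ : ℂ) ≠ 0 := by exact_mod_cast (norm_pos_iff.2 hw).ne'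
  have : (w / ‖w‖) * ‖z‖ - z = (w / ‖w‖) * ((‖z‖ : ℂ) - ‖w‖) + (w - z) := by
    field_simp; ring
  rw [this]
  refine (norm_add_le _ _).trans ?_
  rw [norm_mul, norm_div, ← ofReal_sub, Complex.norm_real, Complex.norm_real, norm_norm,
    div_self (norm_pos_iff.2 hw).ne', one_mul, norm_sub_rev w z]
  have := abs_norm_sub_norm_le z w
  rw [Real.norm_eq_abs]
  linarith

lemma norm_cpow_sub_le {s : ℂ} (hs : s ∈ ball (1 : ℂ) (1 / 4)) {t a b : ℝ} (ht : 1 ≤ t)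
    (ha : t ≤ a) (hb : t ≤ b) :
    ‖(b : ℂ) ^ (-2 * s) - (a : ℂ) ^ (-2 * s)‖ ≤ 3 * t ^ (-(5 / 2) : ℝ) * |b - a| := by
  have hs' : ‖s - 1‖ < 1 / 4 := by simpa [dist_eq_norm] using hs
  have hre : 3 / 4 < s.re := by
    have := (abs_le.1 (abs_re_le_norm (s - 1))).1
    simp at this; linarith
  have hn : ‖s‖ ≤ 3 / 2 := by
    have : ‖s‖ ≤ ‖s - 1‖ + ‖(1 : ℂ)‖ := by simpa using norm_add_le (s - 1) 1
    simp at this; linarith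
  have hs0 : -2 * s ≠ 0 := by
    intro h
    have : s = 0 := by simpa using h
    simp [this] at hre; linarith
  have key := Convex.norm_image_sub_le_of_norm_hasDerivWithin_le (s := Ici t) (x := a) (y := b)
    (f := fun x : ℝ => (x : ℂ) ^ (-2 * s)) (f' := fun x : ℝ => (-2 * s) * (x : ℂ) ^ (-2 * s - 1))
    (C := 3 * t ^ (-(5 / 2) : ℝ)) ?_ ?_ (convex_Ici t) ha hb
  · simpa [Real.norm_eq_abs] using key
  · intro x hx
    have hx0 : 0 < x := lt_of_lt_of_le (by linarith) hx
    exact (hasDerivAt_ofReal_cpow_const hx0.ne' hs0).hasDerivWithinAt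
  · intro x hx
    have hx0 : 0 < x := lt_of_lt_of_le (by linarith) hx
    have hxt : t ≤ x := hx
    rw [norm_mul, norm_cpow_eq_rpow_re_of_pos hx0]
    have h1 : x ^ (-2 * s - 1).re ≤ t ^ (-(5 / 2) : ℝ) := by
      calc x ^ (-2 * s - 1).re ≤ x ^ (-(5 / 2) : ℝ) := by
            refine Real.rpow_le_rpow_of_exponent_le (by linarith) ?_
            simp; linarith
        _ ≤ _ := Real.rpow_le_rpow_of_nonpos (by linarith) hxt (by norm_num)
    have h2 : ‖-2 * s‖ ≤ 3 := by
      rw [norm_mul]; simp; linarith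
    exact mul_le_mul h2 h1 (by positivity) (by norm_num)

/-- The Hecke character varies slowly: one power of `|z|` is gained on the trivial bound. -/
lemma hecke_sub_le (k : ℕ) : ∃ C : ℝ, 0 ≤ C ∧ ∀ s ∈ ball (1 : ℂ) (1 / 4), ∀ z w : ℂ, 2 ≤ ‖z‖ →
    ‖z - w‖ ≤ 1 → ‖hecke k s w - hecke k s z‖ ≤ C * ‖z‖ ^ (-(5 / 2) : ℝ) := by
  refine ⟨8 * k + 24, by positivity, fun s hs z w hz hzw => ?_⟩
  have hs' : ‖s - 1‖ < 1 / 4 := by simpa [dist_eq_norm] using hs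
  have hre : 3 / 4 < s.re := by
    have := (abs_le.1 (abs_re_le_norm (s - 1))).1
    simp at this; linarith
  have hz0 : 0 < ‖z‖ := by linarith
  have hzne : z ≠ 0 := norm_pos_iff.1 hz0
  have hw1 : ‖z‖ / 2 ≤ ‖w‖ := by
    have := norm_sub_norm_le z w
    linarith
  have hw0 : 0 < ‖w‖ := by linarith
  have hnz : ‖z / ‖z‖‖ ≤ 1 := by simp [hz0.ne']
  have hnw : ‖w / ‖w‖‖ ≤ 1 := by simp [hw0.ne']
  have e : hecke k s w - hecke k s z
      = ((w / ‖w‖) ^ (4 * k) - (z / ‖z‖) ^ (4 * k)) * (‖z‖ : ℂ) ^ (-2 * s)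
        + (w / ‖w‖) ^ (4 * k) * ((‖w‖ : ℂ) ^ (-2 * s) - (‖z‖ : ℂ) ^ (-2 * s)) := by
    unfold hecke; simp only [← pow_mul]; ring
  rw [e]
  refine (norm_add_le _ _).trans ?_
  rw [norm_mul, norm_mul]
  have h1 : ‖(w / ‖w‖) ^ (4 * k) - (z / ‖z‖) ^ (4 * k)‖ ≤ 8 * k / ‖z‖ := by
    refine (norm_pow_sub_pow_le' hnw hnz _).trans ?_
    have := norm_div_norm_sub_le (w := w) hzne
    have h3 : 2 * ‖z - w‖ / ‖z‖ ≤ 2 * 1 / ‖z‖ := by gcongr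
    calc ((4 * k : ℕ) : ℝ) * ‖w / ‖w‖ - z / ‖z‖‖ ≤ ((4 * k : ℕ) : ℝ) * (2 * 1 / ‖z‖) := by
          gcongr; linarith
      _ = _ := by push_cast; ring
  have h2 : ‖(‖z‖ : ℂ) ^ (-2 * s)‖ ≤ ‖z‖ ^ (-(3 / 2) : ℝ) := by
    rw [norm_cpow_eq_rpow_re_of_pos hz0]
    refine Real.rpow_le_rpow_of_exponent_le (by linarith) ?_
    simp; linarith
  have h3 : ‖(w / ‖w‖) ^ (4 * k)‖ ≤ 1 := by
    rw [norm_pow]; exact pow_le_one₀ (norm_nonneg _) hnw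
  have h4 := norm_cpow_sub_le hs (t := ‖z‖ / 2) (a := ‖z‖) (b := ‖w‖) (by linarith)
    (by linarith) hw1
  have h5 : |‖w‖ - ‖z‖| ≤ 1 := by
    rw [abs_sub_comm]; exact (abs_norm_sub_norm_le z w).trans hzw
  have h6 : (‖z‖ / 2) ^ (-(5 / 2) : ℝ) ≤ 8 * ‖z‖ ^ (-(5 / 2) : ℝ) := by
    rw [Real.div_rpow hz0.le (by norm_num), div_eq_mul_inv, mul_comm, ← Real.rpow_neg (by norm_num)]
    gcongr
    calc (2 : ℝ) ^ (-(-(5 / 2)) : ℝ) ≤ 2 ^ (3 : ℝ) :=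
          Real.rpow_le_rpow_of_exponent_le (by norm_num) (by norm_num)
      _ = 8 := by norm_num
  have h7 : ‖z‖ ^ (-(5 / 2) : ℝ) = ‖z‖ ^ (-(3 / 2) : ℝ) / ‖z‖ := by
    rw [← Real.rpow_sub_one hz0.ne']; norm_num
  have hp : 0 ≤ ‖z‖ ^ (-(5 / 2) : ℝ) := by positivity
  calc _ ≤ (8 * k / ‖z‖) * ‖z‖ ^ (-(3 / 2) : ℝ)
        + 1 * (3 * (‖z‖ / 2) ^ (-(5 / 2) : ℝ) * |‖w‖ - ‖z‖|) := by gcongr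
    _ ≤ 8 * k * ‖z‖ ^ (-(5 / 2) : ℝ) + 1 * (3 * (8 * ‖z‖ ^ (-(5 / 2) : ℝ)) * 1) := by
        rw [h7] at h6 ⊢
        refine add_le_add (le_of_eq (by ring)) ?_
        gcongr
    _ = _ := by ring

/-! ### Continuation of the Hecke `L`-series near `s = 1` -/

/-- The Hecke `L`-series, as a sum over all Gaussian integers (so `4` times the usual one). -/
noncomputable def heckeL (k : ℕ) (s : ℂ) : ℂ := ∑' x : GaussianInt, hecke k s (x : ℂ)

/-- The element `2 + i`, of norm `5`. -/
def beta : GaussianInt := ⟨2, 1⟩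

/-- Representatives of the residue classes modulo `2 + i`: zero and the units. -/
def rho : Fin 5 → GaussianInt := ![0, 1, -1, ⟨0, 1⟩, ⟨0, -1⟩]

lemma residues_bijective :
    Function.Bijective (fun p : GaussianInt × Fin 5 => beta * p.1 + rho p.2) := by
  constructor
  · rintro ⟨⟨a, b⟩, i⟩ ⟨⟨c, d⟩, j⟩ h
    have h1 := congrArg Zsqrtd.re h
    have h2 := congrArg Zsqrtd.im h
    simp only [beta, Zsqrtd.re_add, Zsqrtd.im_add, Zsqrtd.re_mul, Zsqrtd.im_mul] at h1 h2
    fin_cases i <;> fin_cases j <;> simp [rho] at h1 h2 ⊢ <;> omega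
  · rintro ⟨x, y⟩
    have h : (x + 3 * y) % 5 = 0 ∨ (x + 3 * y) % 5 = 1 ∨ (x + 3 * y) % 5 = 4 ∨
      (x + 3 * y) % 5 = 3 ∨ (x + 3 * y) % 5 = 2 := by omega
    -- the inverse of multiplication by `2 + i` is `x + iy ↦ ((2x + y) + (2y - x) i) / 5`
    rcases h with h | h | h | h | h
    · refine ⟨(⟨(2 * x + y) / 5, (2 * y - x) / 5⟩, 0), ?_⟩
      apply Zsqrtd.ext <;> simp [beta, rho] <;> omega
    · refine ⟨(⟨(2 * (x - 1) + y) / 5, (2 * y - (x - 1)) / 5⟩, 1), ?_⟩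
      apply Zsqrtd.ext <;> simp [beta, rho] <;> omega
    · refine ⟨(⟨(2 * (x + 1) + y) / 5, (2 * y - (x + 1)) / 5⟩, 2), ?_⟩
      apply Zsqrtd.ext <;> simp [beta, rho] <;> omega
    · refine ⟨(⟨(2 * x + (y - 1)) / 5, (2 * (y - 1) - x) / 5⟩, 3), ?_⟩
      apply Zsqrtd.ext <;> simp [beta, rho] <;> omega
    · refine ⟨(⟨(2 * x + (y + 1)) / 5, (2 * (y + 1) - x) / 5⟩, 4), ?_⟩
      apply Zsqrtd.ext <;> simp [beta, rho] <;> omega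

lemma norm_rho_le (i : Fin 5) : ‖(rho i : ℂ)‖ ≤ 1 := by
  fin_cases i <;> simp [rho, GaussianInt.toComplex_def']

lemma norm_beta : ‖(beta : ℂ)‖ = √5 := by
  rw [norm_def, normSq_apply]
  simp [beta, GaussianInt.toComplex_def']
  norm_num

lemma re_of_mem_ball {s : ℂ} (hs : s ∈ ball (1 : ℂ) (1 / 4)) : 3 / 4 < s.re := by
  have hs' : ‖s - 1‖ < 1 / 4 := by simpa [dist_eq_norm] using hs
  have := (abs_le.1 (abs_re_le_norm (s - 1))).1
  simp at this; linarith

lemma norm_hecke_le_one (k : ℕ) {s : ℂ} (hs : 0 < s.re) {x : GaussianInt} :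
    ‖hecke k s (x : ℂ)‖ ≤ 1 := by
  rcases eq_or_ne x 0 with rfl | hx
  · simp [hecke_zero k hs]
  · rw [norm_hecke k s (by simpa using hx)]
    exact Real.rpow_le_one_of_one_le_of_nonpos (one_le_norm hx) (by linarith)

/-- Sorting the series by residues modulo `2 + i` and comparing each class with the class of `0`
gives a factor times `L` on one side and, on the other, a series converging beyond `s = 1`. -/
lemma heckeL_eq (k : ℕ) : ∃ G : ℂ → ℂ, DifferentiableOn ℂ G (ball 1 (1 / 4)) ∧
    ∀ s : ℂ, 1 < s.re → heckeL k s * (1 - 5 * hecke k s (beta : ℂ)) = G s := by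
  obtain ⟨C, hC0, hC⟩ := hecke_sub_le k
  refine ⟨fun s => ∑' a : GaussianInt, ∑ i : Fin 5,
    (hecke k s ((beta * a + rho i : GaussianInt) : ℂ) - hecke k s ((beta * a : GaussianInt) : ℂ)),
    ?_, ?_⟩
  · refine differentiableOn_tsum_of_summable_norm
      (u := fun a : GaussianInt => 5 * (C * ‖(a : ℂ)‖ ^ (-(5 / 2) : ℝ)) + if a = 0 then 10 else 0)
      ?_ ?_ isOpen_ball ?_
    · refine ((summable_norm_rpow (by norm_num)).mul_left C).mul_left 5 |>.add ?_
      exact summable_of_hasFiniteSupport ((finite_singleton (0 : GaussianInt)).subset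
        (by intro a ha; by_contra h; simp at h; simp [h] at ha))
    · intro a
      refine DifferentiableOn.fun_sum fun i _ => ?_
      have aux : ∀ z : ℂ, DifferentiableOn ℂ (fun s => hecke k s z) (ball 1 (1 / 4)) := by
        intro z
        unfold hecke
        refine DifferentiableOn.const_mul ?_ _
        refine DifferentiableOn.const_cpow (by fun_prop) (Or.inr fun s hs => ?_)
        have := re_of_mem_ball hs
        have : s ≠ 0 := by rintro rfl; simp at this; linarith
        simpa using this
      exact (aux _).sub (aux _)
    · intro a s hs
      have hre := re_of_mem_ball hs
      by_cases ha : a = 0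
      · rw [if_pos ha]
        have h0 : ∀ i : Fin 5, ‖hecke k s ((beta * a + rho i : GaussianInt) : ℂ)
            - hecke k s ((beta * a : GaussianInt) : ℂ)‖ ≤ 2 := fun i =>
          (norm_sub_le _ _).trans (by
            have := norm_hecke_le_one k (s := s) (by linarith) (x := beta * a + rho i)
            have := norm_hecke_le_one k (s := s) (by linarith) (x := beta * a)
            linarith)
        refine (norm_sum_le_of_le _ fun i _ => h0 i).trans ?_
        simp
        have : 0 ≤ C * ‖(a : ℂ)‖ ^ (-(5 / 2) : ℝ) := by positivity
        linarith
      · rw [if_neg ha, add_zero]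
        have ha1 := one_le_norm ha
        have hb : 2 ≤ ‖(beta : ℂ)‖ := by
          rw [norm_beta]; exact Real.le_sqrt_of_sq_le (by norm_num)
        have hz : 2 * ‖(a : ℂ)‖ ≤ ‖((beta * a : GaussianInt) : ℂ)‖ := by
          rw [GaussianInt.toComplex_mul, norm_mul]; gcongr
        have h0 : ∀ i : Fin 5, ‖hecke k s ((beta * a + rho i : GaussianInt) : ℂ)
            - hecke k s ((beta * a : GaussianInt) : ℂ)‖ ≤ C * ‖(a : ℂ)‖ ^ (-(5 / 2) : ℝ) := by
          intro i
          refine (hC s hs _ _ (by linarith) ?_).trans ?_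
          · rw [GaussianInt.toComplex_add]
            simpa using norm_rho_le i
          · refine mul_le_mul_of_nonneg_left ?_ hC0
            exact Real.rpow_le_rpow_of_nonpos (by linarith) (by linarith) (by norm_num)
        refine (norm_sum_le_of_le _ fun i _ => h0 i).trans ?_
        simp
  · intro s hs
    have hsum := summable_hecke k hs
    have hbne : beta ≠ 0 := by decide
    have hinj : Function.Injective (fun a : GaussianInt => beta * a) :=
      mul_right_injective₀ hbne
    let e : GaussianInt × Fin 5 ≃ GaussianInt := Equiv.ofBijective _ residues_bijective
    have hsum2 : Summable fun p : GaussianInt × Fin 5 => hecke k s ((e p : GaussianInt) : ℂ) :=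
      (e.summable_iff (f := fun x : GaussianInt => hecke k s (x : ℂ))).2 hsum
    have hL : heckeL k s = ∑' a : GaussianInt, ∑ i : Fin 5,
        hecke k s ((beta * a + rho i : GaussianInt) : ℂ) := by
      rw [heckeL, ← e.tsum_eq, hsum2.tsum_prod]
      refine tsum_congr fun a => ?_
      rw [tsum_fintype]; rfl
    have hs1 : Summable fun a : GaussianInt => ∑ i : Fin 5,
        hecke k s ((beta * a + rho i : GaussianInt) : ℂ) := by
      have := hsum2.prod
      refine this.congr fun a => ?_
      rw [tsum_fintype]; rfl
    have hs2 : Summable fun a : GaussianInt => hecke k s ((beta * a : GaussianInt) : ℂ) :=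
      hsum.comp_injective hinj
    have h5 : ∑' a : GaussianInt, ∑ i : Fin 5, hecke k s ((beta * a : GaussianInt) : ℂ)
        = 5 * hecke k s (beta : ℂ) * heckeL k s := by
      rw [heckeL, ← tsum_mul_left]
      refine tsum_congr fun a => ?_
      rw [GaussianInt.toComplex_mul, hecke_mul]
      simp; ring
    simp only [Finset.sum_sub_distrib]
    rw [hs1.tsum_sub (by simpa using hs2.mul_left 5), ← hL, h5]
    ring

lemma beta_pow_aux (k : ℕ) : ∃ m n : ℤ, ((-7 + 24 * I : ℂ)) ^ (k + 1)
    = ((5 * m + 3 : ℤ) : ℂ) + ((5 * n + 4 : ℤ) : ℂ) * I := by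
  induction k with
  | zero => exact ⟨-2, 4, by push_cast; ring⟩
  | succ k ih =>
    obtain ⟨m, n, h⟩ := ih
    refine ⟨-7 * m - 24 * n - 24, 24 * m - 7 * n + 8, ?_⟩
    rw [pow_succ, h]
    push_cast
    linear_combination (24 * (5 * n + 4)) * I_sq

/-- The argument of `2 + i` is not a rational multiple of `π`: the numerator of
`((2 + i)/(2 - i))^{2k}` is never divisible by `5`. -/
lemma hecke_beta_ne {k : ℕ} (hk : k ≠ 0) : 1 - 5 * hecke k 1 (beta : ℂ) ≠ 0 := by
  obtain ⟨j, rfl⟩ := Nat.exists_eq_succ_of_ne_zero hk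
  intro h
  have h5 : ((√5 : ℝ) : ℂ) ^ 2 = 5 := by
    rw [← ofReal_pow, Real.sq_sqrt (by norm_num)]; norm_num
  have h51 : ((√5 : ℝ) : ℂ) ^ (-2 * 1 : ℂ) = 1 / 5 := by
    rw [mul_one, cpow_neg, show (2 : ℂ) = ((2 : ℕ) : ℂ) by norm_num, cpow_natCast, h5]; norm_num
  have hb : ((beta : ℂ) / ((√5 : ℝ) : ℂ)) ^ 4 = (-7 + 24 * I) / 25 := by
    rw [div_pow, show ((√5 : ℝ) : ℂ) ^ 4 = (((√5 : ℝ) : ℂ) ^ 2) ^ 2 by ring, h5]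
    simp only [beta, GaussianInt.toComplex_def']
    push_cast
    have : (2 + 1 * I) ^ 4 = -7 + 24 * I := by
      linear_combination (I ^ 2 + 8 * I + 23) * I_sq
    rw [this]; norm_num
  have h2 : hecke (j + 1) 1 (beta : ℂ) = ((-7 + 24 * I) / 25) ^ (j + 1) * (1 / 5) := by
    unfold hecke
    rw [norm_beta, hb, h51]
  obtain ⟨m, n, hmn⟩ := beta_pow_aux j
  rw [Nat.succ_eq_add_one, h2, div_pow, hmn] at h
  have h3 : ((5 * m + 3 : ℤ) : ℂ) + ((5 * n + 4 : ℤ) : ℂ) * I = ((25 ^ (j + 1) : ℤ) : ℂ) := by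
    have : (25 : ℂ) ^ (j + 1) ≠ 0 := pow_ne_zero _ (by norm_num)
    field_simp at h
    push_cast at h ⊢
    linear_combination -h
  have h4 := congrArg Complex.im h3
  simp only [add_im, mul_im, intCast_im, intCast_re, I_re, I_im] at h4
  have h6 : (5 * n + 4 : ℤ) = 0 := by
    have : ((5 * n + 4 : ℤ) : ℝ) = 0 := by linarith
    exact_mod_cast this
  omega

/-- For `k ≠ 0` the function `L` extends across `s = 1`. -/
lemma heckeL_extends {k : ℕ} (hk : k ≠ 0) : ∃ F : ℂ → ℂ, DifferentiableAt ℂ F 1 ∧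
    ∀ᶠ s : ℝ in 𝓝[>] 1, heckeL k s = F s := by
  obtain ⟨G, hG, hLG⟩ := heckeL_eq k
  have hne := hecke_beta_ne hk
  have hd : DifferentiableAt ℂ (fun s => 1 - 5 * hecke k s (beta : ℂ)) 1 := by
    unfold hecke
    refine DifferentiableAt.const_sub (DifferentiableAt.const_mul
      (DifferentiableAt.const_mul ?_ _) _) _
    exact DifferentiableAt.const_cpow (by fun_prop) (Or.inr (by simp))
  refine ⟨fun s => G s / (1 - 5 * hecke k s (beta : ℂ)), ?_, ?_⟩
  · exact (hG.differentiableAt (isOpen_ball.mem_nhds (by simp))).div hd hne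
  · have hc := hd.continuousAt.eventually_ne hne
    have ht : Tendsto (fun s : ℝ => (s : ℂ)) (𝓝[>] 1) (𝓝 1) := by
      refine tendsto_nhdsWithin_of_tendsto_nhds ?_
      simpa using continuous_ofReal.tendsto (1 : ℝ)
    filter_upwards [ht.eventually hc, self_mem_nhdsWithin] with s h1 h2
    rw [eq_div_iff h1]
    exact hLG s (by simpa using h2)

/-- The zeta function of `ℤ[i]` has at most a simple pole at `s = 1`. -/
lemma heckeL_zero_le : ∃ C : ℝ, 0 < C ∧ ∀ᶠ s : ℝ in 𝓝[>] 1, ‖heckeL 0 s‖ ≤ C / (s - 1) := by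
  obtain ⟨G, hG, hLG⟩ := heckeL_eq 0
  have hGc : ContinuousAt G 1 := (hG.differentiableAt (isOpen_ball.mem_nhds (by simp))).continuousAt
  have ht : Tendsto (fun s : ℝ => (s : ℂ)) (𝓝[>] 1) (𝓝 1) := by
    refine tendsto_nhdsWithin_of_tendsto_nhds ?_
    simpa using continuous_ofReal.tendsto (1 : ℝ)
  have hb : ∀ᶠ s : ℝ in 𝓝[>] 1, ‖G s‖ ≤ ‖G 1‖ + 1 := by
    have := (hGc.norm.tendsto.comp ht).eventually (gt_mem_nhds (lt_add_one ‖G 1‖))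
    filter_upwards [this] with s hs using hs.le
  refine ⟨2 * (‖G 1‖ + 1), by positivity, ?_⟩
  filter_upwards [hb, Ioo_mem_nhdsGT (show (1 : ℝ) < 2 by norm_num)] with s h1 h2
  have hs1 : 0 < s - 1 := by linarith [h2.1]
  have hs2 : s - 1 ≤ 1 := by linarith [h2.2]
  have e := hLG s (by simpa using h2.1)
  -- here `5 |2 + i|^{-2s} = 5^{1-s} ≤ 1 / s` by Bernoulli's inequality
  have hval : 5 * hecke 0 s (beta : ℂ) = ((5 ^ (-(s - 1)) : ℝ) : ℂ) := by
    unfold hecke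
    rw [norm_beta, pow_zero, one_mul, show (-2 * (s : ℂ)) = ((-2 * s : ℝ) : ℂ) by push_cast; ring,
      ← ofReal_cpow (by positivity), Real.sqrt_eq_rpow, ← Real.rpow_mul (by norm_num),
      show (5 : ℂ) = ((5 : ℝ) : ℂ) by norm_num, ← ofReal_mul]
    congr 1
    rw [show -(s - 1) = 1 + 1 / 2 * (-2 * s) by ring, Real.rpow_add (by norm_num), Real.rpow_one]
  have hlow : (s - 1) / 2 ≤ 1 - (5 : ℝ) ^ (-(s - 1)) := by
    have hbern : 1 + (s - 1) ≤ (5 : ℝ) ^ (s - 1) := by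
      rw [Real.rpow_def_of_pos (by norm_num)]
      have hlog : 1 ≤ Real.log 5 := by
        rw [Real.le_log_iff_exp_le (by norm_num)]
        linarith [Real.exp_one_lt_d9]
      have := Real.add_one_le_exp (Real.log 5 * (s - 1))
      nlinarith
    rw [Real.rpow_neg (by norm_num)]
    have h3 : ((5 : ℝ) ^ (s - 1))⁻¹ ≤ (1 + (s - 1))⁻¹ := inv_anti₀ (by linarith) hbern
    have h4 : (1 + (s - 1))⁻¹ ≤ 1 - (s - 1) / 2 := by
      rw [inv_le_iff_one_le_mul₀ (by linarith)]; nlinarith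
    linarith
  rw [hval, ← ofReal_one, ← ofReal_sub] at e
  have hn := congrArg norm e
  rw [norm_mul, Complex.norm_real, Real.norm_of_nonneg (by linarith)] at hn
  rw [le_div_iff₀ hs1]
  have : ‖heckeL 0 s‖ * ((s - 1) / 2) ≤ ‖G s‖ := by
    rw [← hn]; gcongr
  linarith

/-! ### Euler product -/

/-- The Gaussian primes in the half-open first quadrant: one from each class of associates. -/
def quadPrimes : Set GaussianInt := {p | Prime p ∧ 0 < p.re ∧ 0 ≤ p.im}

lemma unit_cases {u : GaussianInt} (hu : IsUnit u) :
    u = 1 ∨ u = -1 ∨ u = ⟨0, 1⟩ ∨ u = ⟨0, -1⟩ := by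
  have h1 : u.norm = 1 := by
    have := Zsqrtd.norm_eq_one_iff.2 hu
    have h2 := GaussianInt.norm_nonneg u
    omega
  obtain ⟨a, b⟩ := u
  simp only [Zsqrtd.norm_def] at h1
  have ha : -1 ≤ a ∧ a ≤ 1 := by constructor <;> nlinarith [mul_self_nonneg b]
  have hb : -1 ≤ b ∧ b ≤ 1 := by constructor <;> nlinarith [mul_self_nonneg a]
  obtain ⟨ha1, ha2⟩ := ha
  obtain ⟨hb1, hb2⟩ := hb
  interval_cases a <;> interval_cases b <;> simp [Zsqrtd.ext_iff] at h1 ⊢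

lemma isUnit_I : IsUnit (⟨0, 1⟩ : GaussianInt) := by
  rw [← Zsqrtd.norm_eq_one_iff]; rfl

lemma isUnit_neg_I : IsUnit (⟨0, -1⟩ : GaussianInt) := by
  rw [← Zsqrtd.norm_eq_one_iff]; rfl

lemma exists_unit_mul {x : GaussianInt} (hx : x ≠ 0) :
    ∃ u : GaussianInt, IsUnit u ∧ 0 < (u * x).re ∧ 0 ≤ (u * x).im := by
  obtain ⟨a, b⟩ := x
  have h : ¬ (a = 0 ∧ b = 0) := fun h => hx (Zsqrtd.ext h.1 h.2)
  by_cases h1 : 0 < a ∧ 0 ≤ b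
  · exact ⟨1, isUnit_one, by simpa using h1⟩
  by_cases h2 : a ≤ 0 ∧ 0 < b
  · refine ⟨⟨0, -1⟩, isUnit_neg_I, ?_⟩
    simp; omega
  by_cases h3 : a < 0 ∧ b ≤ 0
  · refine ⟨-1, isUnit_one.neg, ?_⟩
    simp; omega
  · refine ⟨⟨0, 1⟩, isUnit_I, ?_⟩
    simp; omega

lemma exists_quadPrime_dvd {x : GaussianInt} (hx : x ≠ 0) (hu : ¬ IsUnit x) :
    ∃ p ∈ quadPrimes, p ∣ x := by
  obtain ⟨q, hq, hqx⟩ := WfDvdMonoid.exists_irreducible_factor hu hx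
  obtain ⟨u, hu, h1, h2⟩ := exists_unit_mul hq.ne_zero
  have ha : Associated q (u * q) := ⟨hu.unit, mul_comm _ _⟩
  exact ⟨u * q, ⟨ha.prime hq.prime, h1, h2⟩, ha.symm.dvd.trans hqx⟩

lemma quadPrimes_eq {p q : GaussianInt} (hp : p ∈ quadPrimes) (hq : q ∈ quadPrimes) (h : p ∣ q) :
    p = q := by
  obtain ⟨u, hu⟩ := hp.1.associated_of_dvd hq.1 h
  obtain ⟨-, hp1, hp2⟩ := hp
  obtain ⟨-, hq1, hq2⟩ := hq
  obtain ⟨a, b⟩ := p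
  rcases unit_cases u.isUnit with h | h | h | h <;> rw [h] at hu <;> subst hu <;>
    simp at hp1 hp2 hq1 hq2 ⊢ <;> omega

lemma hecke_unit (k : ℕ) (s : ℂ) {u : GaussianInt} (hu : IsUnit u) : hecke k s (u : ℂ) = 1 := by
  rcases unit_cases hu with rfl | rfl | rfl | rfl <;>
    simp [hecke, GaussianInt.toComplex_def', Even.neg_pow (show Even 4 by decide)]

open Classical in
/-- Sieving out the multiples of finitely many primes removes their Euler factors. -/
lemma sifted_sum (k : ℕ) {s : ℂ} (hs : 1 < s.re) (S : Finset quadPrimes) :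
    ∑' x : GaussianInt, (if ∀ p ∈ S, ¬ (p : GaussianInt) ∣ x then hecke k s (x : ℂ) else 0)
      = heckeL k s * ∏ p ∈ S, (1 - hecke k s ((p : GaussianInt) : ℂ)) := by
  have hsummable : ∀ (Q : GaussianInt → Prop) [DecidablePred Q],
      Summable fun x : GaussianInt => if Q x then hecke k s (x : ℂ) else 0 := by
    intro Q _
    refine Summable.of_norm_bounded (summable_hecke_norm k hs) fun x => ?_
    split_ifs <;> simp
  induction S using Finset.induction_on with
  | empty => simp [heckeL]
  | insert q S hq ih =>
    set A : GaussianInt → Prop := fun x => ∀ p ∈ S, ¬ (p : GaussianInt) ∣ x with hA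
    have hq0 : (q : GaussianInt) ≠ 0 := q.2.1.ne_zero
    have hinj : Function.Injective (fun a : GaussianInt => (q : GaussianInt) * a) :=
      mul_right_injective₀ hq0
    have h1 : ∀ x : GaussianInt,
        (if ∀ p ∈ insert q S, ¬ (p : GaussianInt) ∣ x then hecke k s (x : ℂ) else 0)
        = (if A x then hecke k s (x : ℂ) else 0)
          - (if A x ∧ (q : GaussianInt) ∣ x then hecke k s (x : ℂ) else 0) := by
      intro x
      simp only [Finset.forall_mem_insert, hA]
      by_cases a : (q : GaussianInt) ∣ x <;> by_cases b : ∀ p ∈ S, ¬ (p : GaussianInt) ∣ x <;>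
        simp [a]
    have h2 : ∑' x : GaussianInt, (if A x ∧ (q : GaussianInt) ∣ x then hecke k s (x : ℂ) else 0)
        = hecke k s ((q : GaussianInt) : ℂ) * ∑' x : GaussianInt,
            (if A x then hecke k s (x : ℂ) else 0) := by
      rw [← hinj.tsum_eq, ← tsum_mul_left]
      · refine tsum_congr fun x => ?_
        have hAA : A (q * x) ↔ A x := by
          refine forall₂_congr fun p hp => not_congr ⟨fun h => ?_, fun h => h.mul_left _⟩
          refine (p.2.1.dvd_or_dvd h).resolve_left fun h => hq ?_
          have := Subtype.ext (quadPrimes_eq p.2 q.2 h)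
          exact this ▸ hp
        simp only [hAA, dvd_mul_right, and_true, GaussianInt.toComplex_mul, hecke_mul]
        split_ifs <;> simp
      · intro x hx
        have : (q : GaussianInt) ∣ x := by
          by_contra h
          simp [h] at hx
        obtain ⟨y, rfl⟩ := this
        exact ⟨y, rfl⟩
    rw [tsum_congr h1, (hsummable _).tsum_sub (hsummable _), h2, Finset.prod_insert hq]
    rw [ih]
    ring

/-- The Euler product of `L`; the constant `4` is the number of units. -/
lemma euler_product (k : ℕ) {s : ℂ} (hs : 1 < s.re) :
    Tendsto (fun S : Finset quadPrimes =>
      heckeL k s * ∏ p ∈ S, (1 - hecke k s ((p : GaussianInt) : ℂ))) atTop (𝓝 4) := by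
  classical
  have hlim : ∑' x : GaussianInt, (if IsUnit x then hecke k s (x : ℂ) else 0) = 4 := by
    let U : Finset GaussianInt := {1, -1, ⟨0, 1⟩, ⟨0, -1⟩}
    have hU : ∀ x ∈ U, IsUnit x := by
      intro x hx
      simp only [U, Finset.mem_insert, Finset.mem_singleton] at hx
      rcases hx with rfl | rfl | rfl | rfl
      exacts [isUnit_one, isUnit_one.neg, isUnit_I, isUnit_neg_I]
    rw [tsum_eq_sum (s := U)]
    · rw [Finset.sum_congr rfl (g := fun _ => (1 : ℂ))]
      · rw [Finset.sum_const, show U.card = 4 by decide]; norm_num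
      · intro x hx
        rw [if_pos (hU x hx), hecke_unit k s (hU x hx)]
    · intro x hx
      rw [if_neg fun h => hx ?_]
      simpa [U] using unit_cases h
  rw [← hlim]
  simp_rw [← sifted_sum k hs]
  refine tendsto_tsum_of_dominated_convergence (summable_hecke_norm k hs) (fun x => ?_) ?_
  · by_cases hu : IsUnit x
    · refine tendsto_const_nhds.congr fun S => ?_
      rw [if_pos hu, if_pos fun p _ hd => p.2.1.not_isUnit (isUnit_of_dvd_unit hd hu)]
    · rw [if_neg hu]
      rcases eq_or_ne x 0 with rfl | hx
      · refine tendsto_const_nhds.congr fun S => ?_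
        simp [hecke_zero k (by linarith : 0 < s.re)]
      · obtain ⟨p, hp, hpx⟩ := exists_quadPrime_dvd hx hu
        refine tendsto_const_nhds.congr' ?_
        filter_upwards [eventually_ge_atTop {(⟨p, hp⟩ : quadPrimes)}] with S hS
        rw [if_neg fun h => h ⟨p, hp⟩ (hS (by simp)) hpx]
  · refine Eventually.of_forall fun S x => ?_
    split_ifs <;> simp

/-- The sum over primes `∑ Re ψ(p)^k |p|^{-2s}`. -/
noncomputable def primeSum (k : ℕ) (s : ℝ) : ℝ :=
  ∑' p : quadPrimes, (hecke k s ((p : GaussianInt) : ℂ)).re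

lemma two_le_normSq {p : GaussianInt} (hp : Prime p) : 2 ≤ ‖(p : ℂ)‖ ^ 2 := by
  rw [← normSq_eq_norm_sq, ← GaussianInt.intCast_real_norm]
  have h0 : 0 < p.norm := GaussianInt.norm_pos.2 hp.ne_zero
  have h1 : p.norm ≠ 1 := fun h => hp.not_isUnit (Zsqrtd.norm_eq_one_iff.1 (by simp [h]))
  have : 2 ≤ p.norm := by omega
  exact_mod_cast this

lemma norm_hecke_prime_le (k : ℕ) {s : ℝ} (hs : 1 < s) {p : GaussianInt} (hp : Prime p) :
    ‖hecke k s (p : ℂ)‖ ≤ 1 / 2 ∧ ‖hecke k s (p : ℂ)‖ ^ 2 ≤ ‖(p : ℂ)‖ ^ (-4 : ℝ) := by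
  have h1 := one_le_norm hp.ne_zero
  have h2 : ‖hecke k s (p : ℂ)‖ ≤ ‖(p : ℂ)‖ ^ (-2 : ℝ) := by
    rw [norm_hecke k _ (by simpa using hp.ne_zero)]
    exact Real.rpow_le_rpow_of_exponent_le h1 (by simp; linarith)
  have h3 : ‖(p : ℂ)‖ ^ (-2 : ℝ) ≤ 1 / 2 := by
    rw [Real.rpow_neg (norm_nonneg _), Real.rpow_two, one_div]
    exact inv_anti₀ (by norm_num) (two_le_normSq hp)
  refine ⟨h2.trans h3, ?_⟩
  calc _ ≤ (‖(p : ℂ)‖ ^ (-2 : ℝ)) ^ 2 := by gcongr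
    _ = _ := by
      rw [← Real.rpow_natCast, ← Real.rpow_mul (norm_nonneg _)]; norm_num

lemma abs_log_add_re_le {w : ℂ} (hw : ‖w‖ ≤ 1 / 2) : |Real.log ‖1 - w‖ + w.re| ≤ ‖w‖ ^ 2 := by
  have h := norm_log_one_add_sub_self_le (z := -w) (by rw [norm_neg]; linarith)
  have h2 := (abs_re_le_norm _).trans h
  rw [sub_re, log_re, ← sub_eq_add_neg, neg_re, sub_neg_eq_add, norm_neg] at h2
  refine h2.trans ?_
  have : (1 - ‖w‖)⁻¹ ≤ 2 := by
    rw [inv_le_comm₀ (by linarith) (by norm_num)]; linarith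
  nlinarith [sq_nonneg ‖w‖]

lemma summable_primeSum (k : ℕ) {s : ℝ} (hs : 1 < s) :
    Summable fun p : quadPrimes => (hecke k s ((p : GaussianInt) : ℂ)).re := by
  have := (summable_hecke k (s := (s : ℂ)) (by simpa using hs)).comp_injective
    (Subtype.val_injective (p := (· ∈ quadPrimes)))
  exact (hasSum_re this.hasSum).summable

/-- Taking logarithms in the Euler product, up to the bounded contribution of prime powers. -/
lemma log_heckeL (k : ℕ) : ∃ C : ℝ, ∀ s : ℝ, 1 < s → heckeL k s ≠ 0 ∧
    |Real.log ‖heckeL k s‖ - primeSum k s| ≤ C := by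
  have hsum4 : Summable fun p : quadPrimes => ‖((p : GaussianInt) : ℂ)‖ ^ (-4 : ℝ) :=
    (summable_norm_rpow (by norm_num)).comp_injective
      (Subtype.val_injective (p := (· ∈ quadPrimes)))
  refine ⟨Real.log 4 + ∑' p : quadPrimes, ‖((p : GaussianInt) : ℂ)‖ ^ (-4 : ℝ), fun s hs => ?_⟩
  have hE := euler_product k (s := (s : ℂ)) (by simpa using hs)
  have hL : heckeL k s ≠ 0 := by
    intro h
    simp only [h, zero_mul] at hE
    have := tendsto_nhds_unique hE tendsto_const_nhds
    norm_num at this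
  refine ⟨hL, ?_⟩
  set g : quadPrimes → ℝ := fun p => Real.log ‖1 - hecke k s ((p : GaussianInt) : ℂ)‖ with hg
  set h : quadPrimes → ℝ := fun p => (hecke k s ((p : GaussianInt) : ℂ)).re with hh
  have hgh : ∀ p, ‖g p + h p‖ ≤ ‖((p : GaussianInt) : ℂ)‖ ^ (-4 : ℝ) := fun p => by
    have h1 := norm_hecke_prime_le k hs p.2.1
    exact (abs_log_add_re_le h1.1).trans h1.2
  have hsgh : Summable fun p => g p + h p := Summable.of_norm_bounded hsum4 hgh
  have hsh : Summable h := summable_primeSum k hs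
  have hsg : Summable g := by simpa using hsgh.sub hsh
  have hlog : Tendsto (fun S : Finset quadPrimes => Real.log ‖heckeL k s‖ + ∑ p ∈ S, g p) atTop
      (𝓝 (Real.log 4)) := by
    have h4 := (hE.norm).log (by norm_num)
    rw [show ‖(4 : ℂ)‖ = 4 by norm_num] at h4
    refine h4.congr fun S => ?_
    have hne : ∀ p : quadPrimes, ‖1 - hecke k s ((p : GaussianInt) : ℂ)‖ ≠ 0 := by
      intro p h0
      have h1 := (norm_hecke_prime_le k hs p.2.1).1
      rw [norm_eq_zero, sub_eq_zero] at h0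
      rw [← h0] at h1
      norm_num at h1
    rw [norm_mul, norm_prod, Real.log_mul (by simpa using hL)
      (Finset.prod_ne_zero_iff.2 fun p _ => hne p), Real.log_prod (fun p _ => hne p)]
  have heq := tendsto_nhds_unique hlog (hsg.hasSum.const_add _)
  have h5 : Real.log ‖heckeL k s‖ - primeSum k s = Real.log 4 - ∑' p, (g p + h p) := by
    rw [hsg.tsum_add hsh, heq, primeSum]; ring
  rw [h5]
  have h6 := tsum_of_norm_bounded hsum4.hasSum hgh
  have h7 : 0 ≤ Real.log 4 := Real.log_nonneg (by norm_num)
  rw [Real.norm_eq_abs] at h6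
  calc _ ≤ |Real.log 4| + |∑' p, (g p + h p)| := abs_sub _ _
    _ ≤ _ := by rw [abs_of_nonneg h7]; gcongr

/-! ### Gaussian primes in sectors -/

/-- The angular part `(z/|z|)^4`, which does not change when `z` is multiplied by a unit of
`ℤ[i]`. -/
noncomputable def ang (z : ℂ) : ℂ := (z / ‖z‖) ^ 4

lemma norm_ang {z : ℂ} (hz : z ≠ 0) : ‖ang z‖ = 1 := by
  simp [ang, hz]

lemma hecke_eq (k : ℕ) (s : ℝ) (z : ℂ) :
    hecke k s z = ang z ^ k * ((‖z‖ ^ (-2 * s) : ℝ) : ℂ) := by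
  rw [hecke, ang, ofReal_cpow (norm_nonneg _)]
  push_cast; rfl

lemma hecke_re (k : ℕ) (s : ℝ) (z : ℂ) :
    (hecke k s z).re = (ang z ^ k).re * ‖z‖ ^ (-2 * s) := by
  rw [hecke_eq, re_mul_ofReal]

lemma re_pow_le_of_norm_one {v : ℂ} (hv : ‖v‖ = 1) (k : ℕ) : |(v ^ k).re| ≤ 1 := by
  refine (abs_re_le_norm _).trans ?_
  rw [norm_pow, hv, one_pow]

/-- The classical inequality `3 + 4 cos θ + cos 2θ ≥ 0`, summed over primes. -/
lemma three_four_one (k : ℕ) {s : ℝ} (hs : 1 < s) :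
    0 ≤ 3 * primeSum 0 s + 4 * primeSum k s + primeSum (2 * k) s := by
  have h0 := summable_primeSum 0 hs
  have h1 := summable_primeSum k hs
  have h2 := summable_primeSum (2 * k) hs
  unfold primeSum
  rw [← tsum_mul_left, ← tsum_mul_left, ← (h0.mul_left 3).tsum_add (h1.mul_left 4),
    ← ((h0.mul_left 3).add (h1.mul_left 4)).tsum_add h2]
  refine tsum_nonneg fun p => ?_
  simp only [hecke_re]
  set v := ang ((p : GaussianInt) : ℂ) with hv
  have hv1 : ‖v ^ k‖ = 1 := by
    rw [norm_pow, norm_ang (by simpa using p.2.1.ne_zero), one_pow]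
  have hsq : (v ^ k).re * (v ^ k).re + (v ^ k).im * (v ^ k).im = 1 := by
    rw [← normSq_apply, normSq_eq_norm_sq, hv1, one_pow]
  have e : (v ^ (2 * k)).re = (v ^ k).re * (v ^ k).re - (v ^ k).im * (v ^ k).im := by
    rw [mul_comm, pow_mul, sq, mul_re]
  have hr : 0 ≤ ‖((p : GaussianInt) : ℂ)‖ ^ (-2 * s) := by positivity
  rw [e, pow_zero, one_re]
  have : 0 ≤ 3 * 1 + 4 * (v ^ k).re
      + ((v ^ k).re * (v ^ k).re - (v ^ k).im * (v ^ k).im) := by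
    nlinarith [sq_nonneg (1 + (v ^ k).re)]
  nlinarith [mul_nonneg this hr]

lemma tendsto_ofReal_one : Tendsto (fun s : ℝ => (s : ℂ)) (𝓝[>] 1) (𝓝 1) := by
  refine tendsto_nhdsWithin_of_tendsto_nhds ?_
  simpa using continuous_ofReal.tendsto (1 : ℝ)

lemma primeSum_le {k : ℕ} (hk : k ≠ 0) : ∃ C : ℝ, ∀ᶠ s : ℝ in 𝓝[>] 1, primeSum k s ≤ C := by
  obtain ⟨F, hF, hLF⟩ := heckeL_extends hk
  obtain ⟨C, hC⟩ := log_heckeL k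
  refine ⟨Real.log (‖F 1‖ + 1) + C, ?_⟩
  have h1 := (hF.continuousAt.norm.tendsto.comp tendsto_ofReal_one).eventually
    (gt_mem_nhds (lt_add_one ‖F 1‖))
  filter_upwards [h1, hLF, self_mem_nhdsWithin] with s h1 h2 h3
  obtain ⟨h4, h5⟩ := hC s h3
  have h6 : Real.log ‖heckeL k s‖ ≤ Real.log (‖F 1‖ + 1) := by
    refine Real.log_le_log (norm_pos_iff.2 h4) ?_
    rw [h2]; exact h1.le
  linarith [(abs_le.1 h5).1]

/-- Non-vanishing of `L` at `s = 1`, in logarithmic form. A zero would make `4 log |L|` at most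
`4 log (s - 1)`, which the pole of the zeta function, contributing `-3 log (s - 1)`, cannot
compensate. -/
lemma le_primeSum {k : ℕ} (hk : k ≠ 0) : ∃ C : ℝ, ∀ᶠ s : ℝ in 𝓝[>] 1, C ≤ primeSum k s := by
  obtain ⟨F, hF, hLF⟩ := heckeL_extends hk
  obtain ⟨C, hC⟩ := log_heckeL k
  by_cases hF1 : F 1 = 0
  · exfalso
    obtain ⟨C2, hC2⟩ := primeSum_le (k := 2 * k) (by omega)
    obtain ⟨C0, hC0⟩ := log_heckeL 0
    obtain ⟨Z, hZ0, hZ⟩ := heckeL_zero_le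
    obtain ⟨K, hK⟩ := (hF.isBigO_sub.comp_tendsto tendsto_ofReal_one).bound
    have hlog : Tendsto (fun s : ℝ => Real.log (s - 1)) (𝓝[>] 1) atBot := by
      refine Real.tendsto_log_nhdsGT_zero.comp ?_
      refine tendsto_nhdsWithin_iff.2 ⟨tendsto_nhdsWithin_of_tendsto_nhds ?_, ?_⟩
      · have : Continuous fun s : ℝ => s - 1 := by fun_prop
        simpa using this.tendsto 1
      · filter_upwards [self_mem_nhdsWithin] with s hs
        simpa using hs
    have hbot := hlog.eventually (eventually_lt_atBot
      (-(3 * (Real.log Z + C0) + 4 * (Real.log (|K| + 1) + C) + C2)))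
    have hfalse : ∀ᶠ s : ℝ in 𝓝[>] 1, False := by
      filter_upwards [hbot, hC2, hZ, hK, hLF, self_mem_nhdsWithin] with s h1 h2 h3 h4 h5 h6
      have hs : 0 < s - 1 := by simpa using h6
      obtain ⟨a1, a2⟩ := hC s h6
      obtain ⟨b1, b2⟩ := hC0 s h6
      have h341 := three_four_one k h6
      have c1 : Real.log ‖heckeL 0 s‖ ≤ Real.log Z - Real.log (s - 1) := by
        rw [← Real.log_div hZ0.ne' hs.ne']
        exact Real.log_le_log (norm_pos_iff.2 b1) h3
      have c2 : Real.log ‖heckeL k s‖ ≤ Real.log (|K| + 1) + Real.log (s - 1) := by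
        rw [← Real.log_mul (by positivity) hs.ne']
        refine Real.log_le_log (norm_pos_iff.2 a1) ?_
        have e : ‖(s : ℂ) - 1‖ = s - 1 := by
          rw [← ofReal_one, ← ofReal_sub, Complex.norm_real, Real.norm_of_nonneg hs.le]
        simp only [Function.comp, hF1, sub_zero, e] at h4
        rw [h5]
        refine h4.trans ?_
        gcongr
        linarith [le_abs_self K]
      linarith [(abs_le.1 a2).1, (abs_le.1 b2).1]
    exact (hfalse.exists).choose_spec
  · have h1 : Tendsto (fun s : ℝ => Real.log ‖F s‖) (𝓝[>] 1) (𝓝 (Real.log ‖F 1‖)) :=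
      ((hF.continuousAt.norm.tendsto.comp tendsto_ofReal_one)).log (by simpa using hF1)
    refine ⟨Real.log ‖F 1‖ - 1 - C, ?_⟩
    filter_upwards [h1.eventually (lt_mem_nhds (sub_one_lt _)), hLF, self_mem_nhdsWithin]
      with s h1 h2 h3
    obtain ⟨h4, h5⟩ := hC s h3
    rw [h2] at h5
    linarith [(abs_le.1 h5).2]

lemma primeSum_bdd {k : ℕ} (hk : k ≠ 0) :
    ∃ C : ℝ, 0 ≤ C ∧ ∀ᶠ s : ℝ in 𝓝[>] 1, |primeSum k s| ≤ C := by
  obtain ⟨C1, h1⟩ := primeSum_le hk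
  obtain ⟨C2, h2⟩ := le_primeSum hk
  refine ⟨|C1| + |C2|, by positivity, ?_⟩
  filter_upwards [h1, h2] with s h1 h2
  exact abs_le.2 ⟨by linarith [neg_abs_le C2, abs_nonneg C1],
    by linarith [le_abs_self C1, abs_nonneg C2]⟩

lemma not_summable_norm_inv_sq : ¬ Summable fun x : GaussianInt => ‖(x : ℂ)‖ ^ (-2 : ℝ) := by
  intro h
  let φ : (Σ n : ℕ, Fin (n + 1)) → GaussianInt := fun q => ⟨(q.1 : ℤ) + 1, (q.2 : ℕ)⟩
  have hφ : Function.Injective φ := by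
    rintro ⟨n, i⟩ ⟨m, j⟩ h
    have h1 : (n : ℤ) + 1 = m + 1 := congrArg Zsqrtd.re h
    have h2 : ((i : ℕ) : ℤ) = (j : ℕ) := congrArg Zsqrtd.im h
    obtain rfl : n = m := by omega
    obtain rfl : i = j := Fin.ext (by omega)
    rfl
  have hs := (h.comp_injective hφ).sigma
  have hlow : ∀ n : ℕ, 1 / 2 * (1 / ((n + 1 : ℕ) : ℝ)) ≤
      ∑' i : Fin (n + 1), ‖((φ ⟨n, i⟩ : GaussianInt) : ℂ)‖ ^ (-2 : ℝ) := by
    intro n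
    rw [tsum_fintype]
    have : ∀ i : Fin (n + 1), 1 / (2 * ((n + 1 : ℕ) : ℝ) ^ 2) ≤
        ‖((φ ⟨n, i⟩ : GaussianInt) : ℂ)‖ ^ (-2 : ℝ) := by
      intro i
      have hi : ((i : ℕ) : ℝ) ≤ n + 1 := by exact_mod_cast i.2.le
      have hnn : ‖((φ ⟨n, i⟩ : GaussianInt) : ℂ)‖ ^ 2 = ((n : ℝ) + 1) ^ 2 + ((i : ℕ) : ℝ) ^ 2 := by
        rw [← normSq_eq_norm_sq, normSq_apply]
        simp [φ, GaussianInt.toComplex_def']; ring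
      rw [Real.rpow_neg (norm_nonneg _), Real.rpow_two, hnn, one_div]
      refine inv_anti₀ (by positivity) ?_
      push_cast
      nlinarith [Nat.cast_nonneg (α := ℝ) (i : ℕ)]
    refine le_trans (le_of_eq ?_) (Finset.sum_le_sum fun i _ => this i)
    simp
    field_simp
  have h2 : Summable fun n : ℕ => 1 / 2 * (1 / ((n + 1 : ℕ) : ℝ)) :=
    Summable.of_nonneg_of_le (fun n => by positivity) hlow hs
  have h3 : Summable fun n : ℕ => 1 / ((n + 1 : ℕ) : ℝ) := by
    simpa using h2.mul_left 2
  exact Real.not_summable_one_div_natCast ((summable_nat_add_iff 1).1 h3)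

lemma primeSum_zero_unbdd (C : ℝ) : ¬ ∀ᶠ s : ℝ in 𝓝[>] 1, primeSum 0 s ≤ C := by
  intro h
  obtain ⟨C0, hC0⟩ := log_heckeL 0
  refine not_summable_norm_inv_sq (summable_of_sum_le (c := Real.exp (C + C0))
    (fun x => by positivity) fun S => ?_)
  have hcont : Tendsto (fun s : ℝ => ∑ x ∈ S, ‖(x : ℂ)‖ ^ (-2 * s)) (𝓝[>] 1)
      (𝓝 (∑ x ∈ S, ‖(x : ℂ)‖ ^ (-2 : ℝ))) := by
    refine tendsto_finsetSum _ fun x _ => ?_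
    have h1 : Tendsto (fun s : ℝ => -2 * s) (𝓝[>] 1) (𝓝 (-2)) := by
      refine tendsto_nhdsWithin_of_tendsto_nhds ?_
      have : Continuous fun s : ℝ => -2 * s := by fun_prop
      simpa using this.tendsto 1
    exact (Real.continuousAt_const_rpow' (a := ‖(x : ℂ)‖) (b := -2) (by norm_num)).tendsto.comp h1
  refine le_of_tendsto hcont ?_
  filter_upwards [h, self_mem_nhdsWithin] with s h1 h2
  obtain ⟨h3, h4⟩ := hC0 s h2
  have h5 : ‖heckeL 0 s‖ ≤ Real.exp (C + C0) := by
    rw [← Real.log_le_iff_le_exp (norm_pos_iff.2 h3)]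
    linarith [(abs_le.1 h4).2]
  have h2' : 1 < (s : ℂ).re := by simpa using h2
  have h6 : (fun x : GaussianInt => hecke 0 s (x : ℂ))
      = fun x : GaussianInt => ((‖(x : ℂ)‖ ^ (-2 * s) : ℝ) : ℂ) := by
    funext x; rw [hecke_eq, pow_zero, one_mul]
  have hsum := summable_hecke 0 h2'
  rw [h6] at hsum
  have hsum' : Summable fun x : GaussianInt => ‖(x : ℂ)‖ ^ (-2 * s) := summable_ofReal.1 hsum
  calc _ ≤ ∑' x : GaussianInt, ‖(x : ℂ)‖ ^ (-2 * s) :=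
        hsum'.sum_le_tsum _ fun x _ => by positivity
    _ ≤ ‖heckeL 0 s‖ := by
        rw [heckeL, h6, ← ofReal_tsum, Complex.norm_real]; exact le_abs_self _
    _ ≤ _ := h5

lemma two_add_two_re_pow (n : ℕ) {t : ℂ} (ht : ‖t‖ = 1) :
    (2 + 2 * t.re) ^ n
      = ∑ j ∈ Finset.range (2 * n + 1), ((2 * n).choose j : ℝ) * (t ^ (Nat.dist j n)).re := by
  have htc : t * (starRingEnd ℂ) t = 1 := by
    rw [mul_conj, normSq_eq_norm_sq, ht]; norm_num
  have h1 : (((2 + 2 * t.re) ^ n : ℝ) : ℂ) = (t + 1) ^ (2 * n) * (starRingEnd ℂ) t ^ n := by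
    rw [pow_mul, ← mul_pow]
    push_cast
    congr 1
    have h2 : (2 : ℂ) * t.re = t + (starRingEnd ℂ) t := by
      rw [add_conj]; push_cast; ring
    rw [h2]
    linear_combination (-t - 2) * htc
  have h3 := congrArg Complex.re h1
  rw [ofReal_re, add_pow t 1 (2 * n), Finset.sum_mul, re_sum] at h3
  rw [h3]
  refine Finset.sum_congr rfl fun j _ => ?_
  have h4 : (t ^ j * (starRingEnd ℂ) t ^ n).re = (t ^ (Nat.dist j n)).re := by
    rcases le_total n j with h | h
    · rw [Nat.dist_eq_sub_of_le_right h]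
      conv_lhs => rw [← Nat.sub_add_cancel h, pow_add, mul_assoc, ← mul_pow, htc, one_pow, mul_one]
    · rw [Nat.dist_eq_sub_of_le h]
      conv_lhs => rw [← Nat.sub_add_cancel h, pow_add, mul_comm, mul_assoc,
        ← mul_pow, mul_comm _ t, htc, one_pow, mul_one, ← map_pow, conj_re]
  rw [← h4, one_pow, mul_one,
    show t ^ j * ((2 * n).choose j : ℂ) * (starRingEnd ℂ) t ^ n
      = (((2 * n).choose j : ℝ) : ℂ) * (t ^ j * (starRingEnd ℂ) t ^ n) by push_cast; ring,
    re_ofReal_mul]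

/-- The sum of the kernels `|1 + v/w|^{2n}` and `|1 + vw|^{2n}`, peaked at `v = w` and `v = w̄`,
as a trigonometric polynomial in `v`. -/
lemma kernel_expand (n : ℕ) {v w : ℂ} (hv : ‖v‖ = 1) (hw : ‖w‖ = 1) :
    (2 + 2 * (v * (starRingEnd ℂ) w).re) ^ n + (2 + 2 * (v * w).re) ^ n
      = ∑ j ∈ Finset.range (2 * n + 1),
        (2 * ((2 * n).choose j : ℝ) * (w ^ (Nat.dist j n)).re) * (v ^ (Nat.dist j n)).re := by
  rw [two_add_two_re_pow n (by simp [hv, hw]), two_add_two_re_pow n (by simp [hv, hw]),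
    ← Finset.sum_add_distrib]
  refine Finset.sum_congr rfl fun j _ => ?_
  rw [mul_pow, mul_pow, ← map_pow, mul_re, mul_re, conj_re, conj_im]
  ring

lemma two_add_two_re_le {v w : ℂ} (hv : ‖v‖ = 1) (hw : ‖w‖ = 1) {η : ℝ} (hη : 0 ≤ η)
    (h : η ≤ ‖v - w‖) :
    2 + 2 * (v * (starRingEnd ℂ) w).re ≤ 4 - η ^ 2 := by
  have h1 : η ^ 2 ≤ ‖v - w‖ ^ 2 := by gcongr
  rw [← normSq_eq_norm_sq, normSq_sub, normSq_eq_norm_sq, normSq_eq_norm_sq, hv, hw] at h1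
  linarith

lemma two_add_two_re_mem {t : ℂ} (ht : ‖t‖ = 1) : 0 ≤ 2 + 2 * t.re ∧ 2 + 2 * t.re ≤ 4 := by
  have := abs_le.1 ((abs_re_le_norm t).trans ht.le)
  constructor <;> linarith

open Classical in
/-- Gaussian primes with `(p/|p|)^4` near `w` or `w̄` have divergent sum of reciprocal norms. -/
lemma not_summable_near {w : ℂ} (hw : ‖w‖ = 1) {η : ℝ} (hη : 0 < η) (hη2 : η < 2) :
    ¬ Summable fun p : quadPrimes =>
      if ‖ang ((p : GaussianInt) : ℂ) - w‖ < η ∨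
          ‖ang ((p : GaussianInt) : ℂ) - (starRingEnd ℂ) w‖ < η
        then ‖((p : GaussianInt) : ℂ)‖ ^ (-2 : ℝ) else 0 := by
  intro hsum
  set b : quadPrimes → ℝ := fun p =>
      if ‖ang ((p : GaussianInt) : ℂ) - w‖ < η ∨
          ‖ang ((p : GaussianInt) : ℂ) - (starRingEnd ℂ) w‖ < η
        then ‖((p : GaussianInt) : ℂ)‖ ^ (-2 : ℝ) else 0 with hb
  -- the mean value of the kernel, a central binomial coefficient, exceeds its size off the peaks
  obtain ⟨n, hn0, hn⟩ : ∃ n : ℕ, 0 < n ∧ (4 - η ^ 2) ^ n < ((2 * n).choose n : ℝ) := by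
    have hq0 : 0 ≤ (4 - η ^ 2) / 4 := by nlinarith
    have hq1 : (4 - η ^ 2) / 4 < 1 := by nlinarith [sq_pos_of_pos hη]
    have ht := tendsto_self_mul_const_pow_of_lt_one hq0 hq1
    obtain ⟨n, h1, h2⟩ := ((ht.eventually (gt_mem_nhds (show (0 : ℝ) < 1 / 2 by norm_num))).and
      (eventually_gt_atTop 0)).exists
    refine ⟨n, h2, ?_⟩
    have h3 : ((4 : ℝ)) ^ n ≤ 2 * n * ((2 * n).choose n : ℝ) := by
      exact_mod_cast Nat.four_pow_le_two_mul_self_mul_centralBinom n h2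
    rw [div_pow, mul_div_assoc', div_lt_iff₀ (by positivity)] at h1
    have hn' : (0 : ℝ) < n := by exact_mod_cast h2
    have : (n : ℝ) * (4 - η ^ 2) ^ n < n * ((2 * n).choose n : ℝ) := by linarith
    exact lt_of_mul_lt_mul_left this hn'.le
  set c : ℕ → ℝ := fun j => 2 * ((2 * n).choose j : ℝ) * (w ^ (Nat.dist j n)).re with hc
  have hbd : ∀ k : ℕ, k ≠ 0 → ∃ C : ℝ, 0 ≤ C ∧ ∀ᶠ s : ℝ in 𝓝[>] 1, |primeSum k s| ≤ C :=
    fun k hk => primeSum_bdd hk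
  choose! C hC0 hC using hbd
  set D : ℝ := ∑ j ∈ (Finset.range (2 * n + 1)).erase n, |c j| * C (Nat.dist j n) with hD
  set M : ℝ := 2 * ((2 * n).choose n : ℝ) - 2 * (4 - η ^ 2) ^ n with hM
  have hMpos : 0 < M := by rw [hM]; linarith
  refine primeSum_zero_unbdd ((D + 2 * 4 ^ n * ∑' p, b p) / M) ?_
  have hev : ∀ᶠ s : ℝ in 𝓝[>] 1, ∀ j ∈ (Finset.range (2 * n + 1)).erase n,
      |primeSum (Nat.dist j n) s| ≤ C (Nat.dist j n) := by
    rw [eventually_all_finset]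
    intro j hj
    exact hC _ fun h => (Finset.mem_erase.1 hj).1 (Nat.eq_of_dist_eq_zero h)
  filter_upwards [hev, self_mem_nhdsWithin] with s h1 hs
  rw [le_div_iff₀ hMpos]
  have hS := fun k => summable_primeSum k (s := s) hs
  -- the kernel bound, weighted and summed over the primes
  have hpt : ∀ p : quadPrimes, ∑ j ∈ Finset.range (2 * n + 1),
        c j * (hecke (Nat.dist j n) s ((p : GaussianInt) : ℂ)).re
      ≤ 2 * (4 - η ^ 2) ^ n * (hecke 0 s ((p : GaussianInt) : ℂ)).re + 2 * 4 ^ n * b p := by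
    intro p
    simp only [hecke_re, pow_zero, one_re, one_mul]
    set v := ang ((p : GaussianInt) : ℂ) with hv
    set r := ‖((p : GaussianInt) : ℂ)‖ ^ (-2 * s) with hr
    have hr0 : 0 ≤ r := by positivity
    have hv1 : ‖v‖ = 1 := norm_ang (by simpa using p.2.1.ne_zero)
    have hk := kernel_expand n hv1 hw
    simp_rw [← mul_assoc]
    rw [← Finset.sum_mul, ← hk]
    have hE : 0 ≤ (4 - η ^ 2) ^ n := pow_nonneg (by nlinarith) n
    have hm1 := two_add_two_re_mem (t := v * (starRingEnd ℂ) w) (by simp [hv1, hw])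
    have hm2 := two_add_two_re_mem (t := v * w) (by simp [hv1, hw])
    by_cases hB : ‖v - w‖ < η ∨ ‖v - (starRingEnd ℂ) w‖ < η
    · have hbp : b p = ‖((p : GaussianInt) : ℂ)‖ ^ (-2 : ℝ) := if_pos hB
      have hle : r ≤ b p := by
        rw [hbp]
        refine Real.rpow_le_rpow_of_exponent_le (one_le_norm p.2.1.ne_zero) ?_
        have : 1 < s := hs
        linarith
      have e1 := pow_le_pow_left₀ hm1.1 hm1.2 n
      have e2 := pow_le_pow_left₀ hm2.1 hm2.2 n
      calc _ ≤ (4 ^ n + 4 ^ n) * r := by gcongr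
        _ ≤ 2 * 4 ^ n * b p := by rw [← two_mul]; gcongr
        _ ≤ _ := by nlinarith [mul_nonneg hE hr0]
    · have hbp : b p = 0 := if_neg hB
      push Not at hB
      have e1 := pow_le_pow_left₀ hm1.1 (two_add_two_re_le hv1 hw hη.le hB.1) n
      have e2 := two_add_two_re_le hv1 (by simpa using hw) hη.le hB.2
      rw [conj_conj] at e2
      have e3 := pow_le_pow_left₀ hm2.1 e2 n
      rw [hbp, mul_zero, add_zero]
      exact mul_le_mul_of_nonneg_right (by linarith) hr0
  have htot : ∑ j ∈ Finset.range (2 * n + 1), c j * primeSum (Nat.dist j n) s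
      ≤ 2 * (4 - η ^ 2) ^ n * primeSum 0 s + 2 * 4 ^ n * ∑' p, b p := by
    unfold primeSum
    simp_rw [← tsum_mul_left]
    rw [← Summable.tsum_finsetSum fun j _ => (hS _).mul_left _,
      ← ((hS 0).mul_left _).tsum_add (hsum.mul_left _)]
    exact (summable_sum fun j _ => (hS _).mul_left _).tsum_le_tsum hpt
      (((hS 0).mul_left _).add (hsum.mul_left _))
  rw [← Finset.add_sum_erase _ _ (Finset.mem_range.2 (show n < 2 * n + 1 by omega))] at htot
  have hcn : c n = 2 * ((2 * n).choose n : ℝ) := by simp [hc]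
  have hrest : -D ≤ ∑ j ∈ (Finset.range (2 * n + 1)).erase n, c j * primeSum (Nat.dist j n) s := by
    rw [hD, ← Finset.sum_neg_distrib]
    refine Finset.sum_le_sum fun j hj => ?_
    have : |c j * primeSum (Nat.dist j n) s| ≤ |c j| * C (Nat.dist j n) := by
      rw [abs_mul]; gcongr; exact h1 j hj
    exact (abs_le.1 this).1
  rw [hcn, Nat.dist_self] at htot
  rw [hM]
  linarith

/-- **Gaussian primes in sectors.** The Gaussian primes whose direction is close to a prescribed
one have divergent sum of reciprocal norms. -/
theorem not_summable_sector {z : ℂ} (hz : ‖z‖ = 1) {ε : ℝ} (hε : 0 < ε) :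
    ¬ Summable (({x : GaussianInt | Prime x ∧ ‖(x : ℂ) / ‖(x : ℂ)‖ - z‖ < ε}).indicator
      fun x : GaussianInt => ‖(x : ℂ)‖ ^ (-2 : ℝ)) := by
  classical
  intro hsum
  set g := ({x : GaussianInt | Prime x ∧ ‖(x : ℂ) / ‖(x : ℂ)‖ - z‖ < ε}).indicator
      fun x : GaussianInt => ‖(x : ℂ)‖ ^ (-2 : ℝ) with hg
  have hg0 : ∀ x, 0 ≤ g x := fun x => indicator_nonneg (fun _ _ => by positivity) x
  set δ := min ε 1 with hδ
  have hδ0 : 0 < δ := lt_min hε one_pos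
  have hδ1 : δ ≤ 1 := min_le_right _ _
  have hδε : δ ≤ ε := min_le_left _ _
  let un : Fin 4 → GaussianInt := ![1, -1, ⟨0, 1⟩, ⟨0, -1⟩]
  have hun : ∀ i, IsUnit (un i) := by
    intro i
    fin_cases i
    exacts [isUnit_one, isUnit_one.neg, isUnit_I, isUnit_neg_I]
  have hinj : ∀ i, Function.Injective fun x : GaussianInt => un i * x := fun i =>
    mul_right_injective₀ (hun i).ne_zero
  -- a unit multiple of a prime with angular part near that of `z` is in the sector
  have key : ∀ x : GaussianInt, Prime x → ‖ang (x : ℂ) - z ^ 4‖ < δ ^ 4 →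
      ‖(x : ℂ)‖ ^ (-2 : ℝ) ≤ ∑ i, g (un i * x) := by
    intro x hx h
    set v := (x : ℂ) / ‖(x : ℂ)‖ with hv
    have hfac : z ^ 4 - v ^ 4 = (v - z) * (-v - z) * (I * v - z) * (-I * v - z) := by
      linear_combination (v ^ 2 * z ^ 2 - v ^ 4) * I_sq
    have hex : ∃ i, ‖(un i : ℂ) * v - z‖ < δ := by
      by_contra! hcon
      have h0 := hcon 0
      have h1 := hcon 1
      have h2 := hcon 2
      have h3 := hcon 3
      simp [un, GaussianInt.toComplex_def'] at h0 h1 h2 h3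
      rw [ang, ← hv, norm_sub_rev, hfac, norm_mul, norm_mul, norm_mul] at h
      have : δ * δ * δ * δ ≤ ‖v - z‖ * ‖-v - z‖ * ‖I * v - z‖ * ‖-I * v - z‖ := by
        gcongr
        simpa using h3
      nlinarith
    obtain ⟨i, hi⟩ := hex
    have hnorm : ‖((un i * x : GaussianInt) : ℂ)‖ = ‖(x : ℂ)‖ := by
      rw [GaussianInt.toComplex_mul, norm_mul]
      fin_cases i <;> simp [un, GaussianInt.toComplex_def']
    have hmem : un i * x ∈ {x : GaussianInt | Prime x ∧ ‖(x : ℂ) / ‖(x : ℂ)‖ - z‖ < ε} := by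
      refine ⟨(show Associated x (un i * x) from ⟨(hun i).unit, mul_comm _ _⟩).prime hx, ?_⟩
      rw [hnorm, GaussianInt.toComplex_mul, mul_div_assoc]
      exact hi.trans_le hδε
    calc ‖(x : ℂ)‖ ^ (-2 : ℝ) = g (un i * x) := by rw [hg, indicator_of_mem hmem, hnorm]
      _ ≤ _ := Finset.single_le_sum (f := fun j => g (un j * x)) (fun j _ => hg0 _) (Finset.mem_univ i)
  have hs1 : Summable fun x : GaussianInt => ∑ i, g (un i * x) :=
    summable_sum fun i _ => hsum.comp_injective (hinj i)
  have hs2 : Summable fun x : GaussianInt => ∑ i, g (un i * star x) :=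
    hs1.comp_injective star_injective
  refine not_summable_near (w := z ^ 4) (by simp [hz]) (η := δ ^ 4) (by positivity)
    (by have := pow_le_one₀ hδ0.le hδ1 (n := 4); linarith) ?_
  refine Summable.of_nonneg_of_le (fun p => ?_) (fun p => ?_)
    ((hs1.add hs2).comp_injective (Subtype.val_injective (p := (· ∈ quadPrimes))))
  · split_ifs <;> positivity
  · obtain ⟨p, hp, -⟩ := p
    have n1 : 0 ≤ ∑ i, g (un i * p) := Finset.sum_nonneg fun i _ => hg0 _
    have n2 : 0 ≤ ∑ i, g (un i * star p) := Finset.sum_nonneg fun i _ => hg0 _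
    simp only [Function.comp]
    split_ifs with h
    · rcases h with h | h
      · linarith [key p hp h]
      · have hps : Prime (star p) :=
          (MulEquiv.prime_iff (starRingAut (R := GaussianInt)).toMulEquiv).2 hp
        have hns : ‖((star p : GaussianInt) : ℂ)‖ = ‖(p : ℂ)‖ := by
          rw [GaussianInt.toComplex_star, norm_conj]
        have := key (star p) hps (by
          rw [ang, hns, GaussianInt.toComplex_star, ← norm_conj]
          simpa [ang] using h)
        rw [hns] at this
        linarith
    · linarith

/-! ### Porosity and sparseness -/

/-- Every point of `G` at distance at least `H` from the origin has, in each disk about it of radius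
`ρ` at most a tenth of that distance, a disk of radius `c * ρ` free of `G`. -/
def HasHoles (G : Set GaussianInt) (c H : ℝ) : Prop :=
  ∀ w ∈ G, H ≤ ‖(w : ℂ)‖ → ∀ ρ : ℝ, 0 < ρ → ρ ≤ ‖(w : ℂ)‖ / 10 →
    ∃ z : ℂ, ‖z - w‖ ≤ ρ ∧ ∀ w' ∈ G, c * ρ ≤ ‖(w' : ℂ) - z‖

lemma exists_hole {A : Set ℂ} {x : ℂ} {r c : ℝ} (hc : 0 < c) (h : c ≤ por A x r) :
    ∃ y0 : ℂ, ∃ c1 : ℝ, c / 2 < c1 ∧ Metric.ball y0 (c1 * r) ⊆ Metric.ball x r \ A := by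
  have h1 : c / 2 < por A x r := by linarith
  rw [por] at h1
  have hne : {c : ℝ | 0 ≤ c ∧ ∃ y : ℂ, Metric.ball y (c * r) ⊆ Metric.ball x r \ A}.Nonempty :=
    ⟨0, le_rfl, x, by simp⟩
  obtain ⟨c1, ⟨-, y0, h2⟩, h3⟩ := exists_lt_of_lt_csSup hne h1
  exact ⟨y0, c1, h3, h2⟩

/-- Porosity of `J` at `1 / (w + y)`, pulled back by inversion, which near `w` scales distances by
about `‖w‖ ^ 2`. -/
lemma hasHoles_of_porous {G : Set GaussianInt} {J : Set ℂ} {y : ℂ} (hy : ‖y‖ ≤ 1)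
    (hJ : ∀ w ∈ G, (w : ℂ) + y ≠ 0 → ((w : ℂ) + y)⁻¹ ∈ J) (hp : Porous J) :
    ∃ c H : ℝ, 0 < c ∧ 10 ≤ H ∧ HasHoles G c H := by
  obtain ⟨c, ⟨hc0, hc1⟩, r0, hr0, hpor⟩ := hp
  refine ⟨c / 16, max 10 (1 / r0), by positivity, le_max_left _ _, ?_⟩
  intro w hw hH ρ hρ hρw
  set W := ‖(w : ℂ)‖ with hW
  have hW10 : 10 ≤ W := (le_max_left _ _).trans hH
  have hWr : 1 / r0 ≤ W := (le_max_right _ _).trans hH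
  have hW0 : 0 < W := by linarith
  set u := (w : ℂ) + y with hu
  have hu1 : W - 1 ≤ ‖u‖ := by
    have := norm_sub_le u y
    rw [hu, add_sub_cancel_right, ← hu] at this
    linarith
  have hu2 : ‖u‖ ≤ W + 1 := (norm_add_le _ _).trans (by linarith)
  have hupos : 0 < ‖u‖ := by linarith
  have hune : u ≠ 0 := norm_pos_iff.1 hupos
  set r := ρ / (4 * W ^ 2) with hr
  have hrpos : 0 < r := by positivity
  have hrW : r ≤ 1 / 40 / W := by
    rw [hr, div_le_div_iff₀ (by positivity) (by positivity)]
    nlinarith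
  have hrr0 : r < r0 := by
    refine hrW.trans_lt ?_
    rw [div_lt_iff₀ hW0]
    rw [div_le_iff₀ hr0] at hWr
    nlinarith
  obtain ⟨y0, c1, hc1', hball⟩ := exists_hole hc0 (hpor _ (hJ w hw hune) r ⟨hrpos, hrr0⟩)
  have hy0 : y0 ∈ Metric.ball u⁻¹ r :=
    (hball (mem_ball_self (mul_pos (by linarith) hrpos))).1
  rw [mem_ball, dist_eq_norm] at hy0
  have hx1 : 10 / 11 / W ≤ ‖u⁻¹‖ := by
    rw [norm_inv, ← one_div, div_div, div_le_div_iff₀ (by positivity) hupos]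
    linarith
  have hx2 : ‖u⁻¹‖ ≤ 10 / 9 / W := by
    rw [norm_inv, ← one_div, div_div, div_le_div_iff₀ hupos (by positivity)]
    linarith
  have hy1 : 7 / 8 / W ≤ ‖y0‖ := by
    have h1 : ‖u⁻¹‖ - ‖y0‖ ≤ r := by
      rw [← norm_sub_rev] at hy0
      exact (norm_sub_norm_le _ _).trans hy0.le
    have : 7 / 8 / W + 1 / 40 / W ≤ 10 / 11 / W := by
      rw [← add_div]; gcongr; norm_num
    linarith
  have hy2 : ‖y0‖ ≤ 6 / 5 / W := by
    have h1 : ‖y0‖ - ‖u⁻¹‖ ≤ r := (norm_sub_norm_le _ _).trans hy0.le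
    have : 10 / 9 / W + 1 / 40 / W ≤ 6 / 5 / W := by
      rw [← add_div]; gcongr; norm_num
    linarith
  have hy0pos : 0 < ‖y0‖ := lt_of_lt_of_le (by positivity) hy1
  have hy0ne : y0 ≠ 0 := norm_pos_iff.1 hy0pos
  have hzu : ‖y0⁻¹ - u‖ ≤ ρ / 2 := by
    have h1 : y0⁻¹ - u = (u⁻¹ - y0) * (u * y0⁻¹) := by field_simp
    have h2 : ‖u‖ ≤ 11 / 10 * W := by linarith
    have h3 : ‖y0‖⁻¹ ≤ 8 / 7 * W := by
      rw [inv_le_comm₀ hy0pos (by positivity)]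
      refine le_trans (le_of_eq ?_) hy1
      field_simp
    rw [h1, norm_mul, norm_mul, norm_inv, norm_sub_rev]
    calc _ ≤ r * (11 / 10 * W * (8 / 7 * W)) := by gcongr
      _ = 11 / 35 * ρ := by rw [hr]; field_simp; norm_num
      _ ≤ _ := by linarith
  refine ⟨y0⁻¹ - y, ?_, fun w' hw' => ?_⟩
  · rw [show y0⁻¹ - y - (w : ℂ) = y0⁻¹ - u by rw [hu]; ring]
    linarith
  · by_contra! hcon
    set u' := (w' : ℂ) + y with hu'
    rw [show (w' : ℂ) - (y0⁻¹ - y) = u' - y0⁻¹ by rw [hu']; ring] at hcon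
    have h1 : 5 / 6 * W ≤ ‖u'‖ := by
      have e1 : ‖u‖ ≤ ‖u'‖ + ‖u' - y0⁻¹‖ + ‖y0⁻¹ - u‖ := by
        have := norm_sub_le (u' - (u' - y0⁻¹)) (y0⁻¹ - u)
        rw [show u' - (u' - y0⁻¹) - (y0⁻¹ - u) = u by ring] at this
        linarith [norm_sub_le u' (u' - y0⁻¹)]
      nlinarith
    have hu'pos : 0 < ‖u'‖ := lt_of_lt_of_le (by positivity) h1
    have hu'ne : u' ≠ 0 := norm_pos_iff.1 hu'pos
    refine (hball (a := u'⁻¹) ?_).2 (hJ w' hw' hu'ne)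
    rw [mem_ball, dist_eq_norm]
    have h2 : u'⁻¹ - y0 = (y0⁻¹ - u') * (y0 * u'⁻¹) := by field_simp
    have h3 : ‖u'‖⁻¹ ≤ 6 / 5 / W := by
      rw [inv_le_comm₀ hu'pos (by positivity)]
      refine le_trans (le_of_eq ?_) h1
      field_simp
    rw [h2, norm_mul, norm_mul, norm_inv, norm_sub_rev]
    calc _ ≤ c / 16 * ρ * (6 / 5 / W * (6 / 5 / W)) := by gcongr
      _ = 9 / 25 * c * r := by rw [hr]; field_simp; norm_num
      _ < c1 * r := by gcongr; linarith

/-- A set with holes at all scales meets a square of side `(2k+1)^j`, far from the origin, in at most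
`((2k+1)^2 - 1)^j` points: of the `(2k+1)^2` equal subsquares, either the central one is empty or a
point of it produces a hole containing another one. -/
lemma box_count {G : Set GaussianInt} {c H : ℝ} (hH : 10 ≤ H) (hG : HasHoles G c H)
    {k m : ℕ} (hk0 : 0 < k) (hk : 2 ≤ c * k) (hm : m = 2 * k + 1) (j : ℕ) :
    ∀ (a b : ℤ) (S : Finset GaussianInt),
    (∀ x ∈ S, x ∈ G ∧ x.re ∈ Ico a (a + m ^ j) ∧ x.im ∈ Ico b (b + m ^ j) ∧
      H * m ^ j ≤ ‖(x : ℂ)‖) → S.card ≤ (m ^ 2 - 1) ^ j := by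
  induction j with
  | zero =>
    intro a b S hS
    rw [pow_zero, Finset.card_le_one]
    intro x hx x' hx'
    obtain ⟨-, ⟨h1, h2⟩, ⟨h3, h4⟩, -⟩ := hS x hx
    obtain ⟨-, ⟨h5, h6⟩, ⟨h7, h8⟩, -⟩ := hS x' hx'
    ext <;> simp at * <;> omega
  | succ j ih =>
    intro a b S hS
    set s : ℤ := (m : ℤ) ^ j with hs
    have hm0 : (0 : ℤ) < m := by omega
    have hs0 : 0 < s := by positivity
    have hmj : (m : ℤ) ^ (j + 1) = s * m := by rw [pow_succ]
    rw [hmj] at hS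
    let f : GaussianInt → ℤ × ℤ := fun x => ((x.re - a) / s, (x.im - b) / s)
    have hf : ∀ x p q, f x = (p, q) → x.re ∈ Ico (a + p * s) (a + p * s + s) ∧
        x.im ∈ Ico (b + q * s) (b + q * s + s) := by
      intro x p q h
      simp only [f, Prod.mk.injEq] at h
      obtain ⟨h1, h2⟩ := h
      have e1 := Int.emod_add_mul_ediv (x.re - a) s
      have e2 := Int.emod_add_mul_ediv (x.im - b) s
      rw [h1] at e1
      rw [h2] at e2
      have := Int.emod_nonneg (x.re - a) hs0.ne'
      have := Int.emod_lt_of_pos (x.re - a) hs0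
      have := Int.emod_nonneg (x.im - b) hs0.ne'
      have := Int.emod_lt_of_pos (x.im - b) hs0
      refine ⟨⟨?_, ?_⟩, ⟨?_, ?_⟩⟩ <;> linarith [mul_comm s p, mul_comm s q]
    have hmem : ∀ x ∈ S, f x ∈ Finset.Ico (0 : ℤ) m ×ˢ Finset.Ico (0 : ℤ) m := by
      intro x hx
      obtain ⟨-, ⟨h1, h2⟩, ⟨h3, h4⟩, -⟩ := hS x hx
      simp only [f, Finset.mem_product, Finset.mem_Ico]
      refine ⟨⟨Int.ediv_nonneg (by linarith) hs0.le, Int.ediv_lt_of_lt_mul hs0 ?_⟩,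
        ⟨Int.ediv_nonneg (by linarith) hs0.le, Int.ediv_lt_of_lt_mul hs0 ?_⟩⟩ <;>
      linarith [mul_comm s (m : ℤ)]
    have hcast : ((s : ℤ) : ℝ) = (m : ℝ) ^ j := by rw [hs]; push_cast; rfl
    have hsR : (0 : ℝ) < s := by exact_mod_cast hs0
    obtain ⟨q, hq, hqS⟩ : ∃ q ∈ Finset.Ico (0 : ℤ) m ×ˢ Finset.Ico (0 : ℤ) m,
        ∀ x ∈ S, f x ≠ q := by
      by_cases hcen : ∀ x ∈ S, f x ≠ ((k : ℤ), (k : ℤ))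
      · refine ⟨_, ?_, hcen⟩
        simp only [Finset.mem_product, Finset.mem_Ico]
        omega
      push Not at hcen
      obtain ⟨w, hw, hwf⟩ := hcen
      obtain ⟨hwG, -, -, hwfar⟩ := hS w hw
      obtain ⟨⟨w1, w2⟩, w3, w4⟩ := hf w _ _ hwf
      have w1' : (a + k * s : ℝ) ≤ w.re := by exact_mod_cast w1
      have w2' : (w.re : ℝ) < a + k * s + s := by exact_mod_cast w2
      have w3' : (b + k * s : ℝ) ≤ w.im := by exact_mod_cast w3
      have w4' : (w.im : ℝ) < b + k * s + s := by exact_mod_cast w4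
      have hmR : (m : ℝ) = 2 * k + 1 := by rw [hm]; push_cast; ring
      have hkR : (1 : ℝ) ≤ k := by exact_mod_cast hk0
      have hfar1 : H * (s * m) ≤ ‖(w : ℂ)‖ := by
        rw [hcast, ← pow_succ]; exact hwfar
      have hs1 : (1 : ℝ) ≤ s := by exact_mod_cast hs0
      have hsm : (1 : ℝ) ≤ s * m := by nlinarith
      obtain ⟨z, hz1, hz2⟩ := hG w hwG (by nlinarith) (k * s) (by positivity) (by
        have : (k : ℝ) * s ≤ s * m := by rw [hmR]; nlinarith
        nlinarith)
      have hre := (abs_re_le_norm (z - w)).trans hz1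
      have him := (abs_im_le_norm (z - w)).trans hz1
      simp only [sub_re, sub_im, ← GaussianInt.intCast_re, ← GaussianInt.intCast_im] at hre him
      rw [abs_le] at hre him
      refine ⟨(⌊(z.re - a) / s⌋, ⌊(z.im - b) / s⌋), ?_, ?_⟩
      · simp only [Finset.mem_product, Finset.mem_Ico, Int.floor_nonneg, Int.floor_lt]
        refine ⟨⟨div_nonneg (by linarith) hsR.le, ?_⟩, ⟨div_nonneg (by linarith) hsR.le, ?_⟩⟩
        all_goals
          rw [div_lt_iff₀ hsR]
          push_cast
          rw [hmR]
          linarith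
      · intro x hx hxf
        obtain ⟨⟨x1, x2⟩, x3, x4⟩ := hf x _ _ hxf
        set p := ⌊(z.re - a) / s⌋ with hp
        set q := ⌊(z.im - b) / s⌋ with hq
        have p1 := Int.floor_le ((z.re - a) / (s : ℝ))
        have p2 := Int.lt_floor_add_one ((z.re - a) / (s : ℝ))
        have q1 := Int.floor_le ((z.im - b) / (s : ℝ))
        have q2 := Int.lt_floor_add_one ((z.im - b) / (s : ℝ))
        rw [← hp, le_div_iff₀ hsR] at p1
        rw [← hp, div_lt_iff₀ hsR] at p2
        rw [← hq, le_div_iff₀ hsR] at q1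
        rw [← hq, div_lt_iff₀ hsR] at q2
        have x1' : (a + p * s : ℝ) ≤ x.re := by exact_mod_cast x1
        have x2' : (x.re : ℝ) < a + p * s + s := by exact_mod_cast x2
        have x3' : (b + q * s : ℝ) ≤ x.im := by exact_mod_cast x3
        have x4' : (x.im : ℝ) < b + q * s + s := by exact_mod_cast x4
        have h1 := hz2 x (hS x hx).1
        have h2 : ‖(x : ℂ) - z‖ ≤ |((x : ℂ) - z).re| + |((x : ℂ) - z).im| :=
          norm_le_abs_re_add_abs_im _
        have h3 : |((x : ℂ) - z).re| < s := by
          rw [sub_re, ← GaussianInt.intCast_re, abs_lt]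
          constructor <;> linarith
        have h4 : |((x : ℂ) - z).im| < s := by
          rw [sub_im, ← GaussianInt.intCast_im, abs_lt]
          constructor <;> linarith
        nlinarith
    have hcard := Finset.card_le_mul_card_image_of_maps_to (s := S) (f := f)
      (t := (Finset.Ico (0 : ℤ) m ×ˢ Finset.Ico (0 : ℤ) m).erase q)
      (fun x hx => Finset.mem_erase.2 ⟨hqS x hx, hmem x hx⟩) ((m ^ 2 - 1) ^ j) (by
        rintro ⟨p, q'⟩ -
        refine ih (a + p * s) (b + q' * s) _ fun x hx => ?_
        obtain ⟨hxS, hxf⟩ := Finset.mem_filter.1 hx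
        obtain ⟨h1, -, -, h4⟩ := hS x hxS
        obtain ⟨h5, h6⟩ := hf x _ _ hxf
        refine ⟨h1, h5, h6, le_trans ?_ h4⟩
        have : (1 : ℝ) ≤ m := by exact_mod_cast (show 1 ≤ m by omega)
        gcongr
        omega)
    rw [Finset.card_erase_of_mem hq, Finset.card_product] at hcard
    simpa [pow_succ, pow_two] using hcard

/-- The number of points of a set with holes in the annulus `H m^j ≤ ‖x‖ < H m^(j+1)`. -/
lemma shell_count {G : Set GaussianInt} {c : ℝ} {H : ℕ} (hH : 10 ≤ H) (hG : HasHoles G c H)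
    {k m : ℕ} (hk0 : 0 < k) (hk : 2 ≤ c * k) (hm : m = 2 * k + 1) (j : ℕ)
    (S : Finset GaussianInt)
    (hS : ∀ x ∈ S, x ∈ G ∧ (H : ℝ) * m ^ j ≤ ‖(x : ℂ)‖ ∧ ‖(x : ℂ)‖ < H * m ^ (j + 1)) :
    S.card ≤ (m ^ 2 - 1) ^ j * (2 * H * m) ^ 2 := by
  set s : ℤ := (m : ℤ) ^ j with hs
  have hm0 : (0 : ℤ) < m := by omega
  have hs0 : 0 < s := by positivity
  let f : GaussianInt → ℤ × ℤ := fun x => (x.re / s, x.im / s)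
  have hdiv : ∀ n : ℤ, |(n : ℝ)| < H * m ^ (j + 1) →
      n / s ∈ Finset.Ico (-(H * m : ℤ)) (H * m) := by
    intro n hn
    have h1 : |n| < H * m ^ (j + 1) := by exact_mod_cast hn
    rw [abs_lt, pow_succ, ← hs] at h1
    rw [Finset.mem_Ico]
    constructor
    · rw [Int.le_ediv_iff_mul_le hs0]; nlinarith
    · apply Int.ediv_lt_of_lt_mul hs0; nlinarith
  have hcard := Finset.card_le_mul_card_image_of_maps_to (s := S) (f := f)
    (t := Finset.Ico (-(H * m : ℤ)) (H * m) ×ˢ Finset.Ico (-(H * m : ℤ)) (H * m))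
    (fun x hx => by
      obtain ⟨-, -, h3⟩ := hS x hx
      refine Finset.mem_product.2 ⟨hdiv _ (lt_of_le_of_lt ?_ h3), hdiv _ (lt_of_le_of_lt ?_ h3)⟩
      · simpa using abs_re_le_norm (x : ℂ)
      · simpa using abs_im_le_norm (x : ℂ)) ((m ^ 2 - 1) ^ j) (by
      rintro ⟨p, q⟩ -
      refine box_count (by exact_mod_cast hH) hG hk0 hk hm j (p * s) (q * s) _ fun x hx => ?_
      obtain ⟨hxS, hxf⟩ := Finset.mem_filter.1 hx
      obtain ⟨h1, h2, -⟩ := hS x hxS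
      simp only [f, Prod.mk.injEq] at hxf
      obtain ⟨f1, f2⟩ := hxf
      have e1 := Int.emod_add_mul_ediv x.re s
      have e2 := Int.emod_add_mul_ediv x.im s
      rw [f1] at e1
      rw [f2] at e2
      have := Int.emod_nonneg x.re hs0.ne'
      have := Int.emod_lt_of_pos x.re hs0
      have := Int.emod_nonneg x.im hs0.ne'
      have := Int.emod_lt_of_pos x.im hs0
      refine ⟨h1, ⟨?_, ?_⟩, ⟨?_, ?_⟩, h2⟩ <;> linarith [mul_comm s p, mul_comm s q])
  refine hcard.trans (le_of_eq ?_)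
  rw [Finset.card_product, Int.card_Ico,
    show ((H * m : ℤ) - -(H * m)).toNat = 2 * H * m by
      rw [show ((H * m : ℤ) - -(H * m)) = ((2 * H * m : ℕ) : ℤ) by push_cast; ring]
      exact Int.toNat_natCast _]
  ring

lemma finite_norm_lt (N : ℕ) : {x : GaussianInt | ‖(x : ℂ)‖ < N}.Finite := by
  refine (((Set.finite_Icc (-N : ℤ) N).prod (Set.finite_Icc (-N : ℤ) N)).image
    fun p => (⟨p.1, p.2⟩ : GaussianInt)).subset fun x hx => ?_
  have h1 : |(x.re : ℝ)| < N := lt_of_le_of_lt (by simpa using abs_re_le_norm (x : ℂ)) hx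
  have h2 : |(x.im : ℝ)| < N := lt_of_le_of_lt (by simpa using abs_im_le_norm (x : ℂ)) hx
  have h1' : |x.re| < N := by exact_mod_cast h1
  have h2' : |x.im| < N := by exact_mod_cast h2
  rw [abs_lt] at h1' h2'
  exact ⟨(x.re, x.im), ⟨⟨h1'.1.le, h1'.2.le⟩, h2'.1.le, h2'.2.le⟩, rfl⟩

lemma summable_indicator_congr {α : Type*} {A B : Set α} {f : α → ℝ} (h : (A \ B).Finite)
    (h2 : B ⊆ A) (hs : Summable (B.indicator f)) : Summable (A.indicator f) := by
  rw [show A = B ∪ (A \ B) by rw [union_sdiff_cancel h2],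
    indicator_union_of_disjoint disjoint_sdiff_right]
  exact hs.add (summable_of_hasFiniteSupport (h.subset (by simp)))

lemma summable_of_hasHoles {G : Set GaussianInt} {c H : ℝ} (hc : 0 < c)
    (hG : HasHoles G c H) : Summable (G.indicator fun x => ‖(x : ℂ)‖ ^ (-2 : ℝ)) := by
  obtain ⟨N, hN, hN10⟩ : ∃ N : ℕ, H ≤ N ∧ 10 ≤ N := by
    obtain ⟨N, hN⟩ := exists_nat_ge H
    exact ⟨N + 10, by push_cast; linarith, by omega⟩
  have hGN : HasHoles G c N := fun w hw h => hG w hw (hN.trans h)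
  obtain ⟨k, hk0, hk⟩ : ∃ k : ℕ, 0 < k ∧ 2 ≤ c * k := by
    obtain ⟨k, hk⟩ := exists_nat_ge (2 / c)
    refine ⟨k, ?_, by rw [div_le_iff₀ hc] at hk; linarith⟩
    have : (0 : ℝ) < k := lt_of_lt_of_le (by positivity) hk
    exact_mod_cast this
  obtain ⟨m, hm⟩ : ∃ m, m = 2 * k + 1 := ⟨_, rfl⟩
  have hNR : (0 : ℝ) < N := by exact_mod_cast (show 0 < N by omega)
  have hmR : (1 : ℝ) < m := by exact_mod_cast (show 1 < m by omega)
  set q : ℝ := ((m : ℝ) ^ 2 - 1) / m ^ 2 with hq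
  have hq0 : 0 ≤ q := by rw [hq]; refine div_nonneg (by nlinarith) (by positivity)
  have hq1 : q < 1 := by rw [hq, div_lt_one (by positivity)]; linarith
  refine summable_indicator_congr (B := G ∩ {x | (N : ℝ) ≤ ‖(x : ℂ)‖})
    ((finite_norm_lt N).subset fun x hx => ?_) inter_subset_left ?_
  · by_contra h
    exact hx.2 ⟨hx.1, show (N : ℝ) ≤ ‖(x : ℂ)‖ from not_lt.1 h⟩
  rw [← summable_subtype_iff_indicator]
  refine summable_of_sum_le (c := ∑' j : ℕ, 4 * m ^ 2 * q ^ j) (fun x => ?_) fun T => ?_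
  · simp only [Function.comp]; positivity
  set S : Finset GaussianInt := T.map (Function.Embedding.subtype _) with hS
  have hSG : ∀ x ∈ S, x ∈ G ∧ (N : ℝ) ≤ ‖(x : ℂ)‖ := by
    intro x hx
    obtain ⟨t, -, rfl⟩ := Finset.mem_map.1 hx
    exact t.2
  let l : GaussianInt → ℕ := fun x => Nat.log m ⌊‖(x : ℂ)‖ / N⌋₊
  have hl : ∀ x ∈ S, (N : ℝ) * m ^ l x ≤ ‖(x : ℂ)‖ ∧ ‖(x : ℂ)‖ < N * m ^ (l x + 1) := by
    intro x hx
    have h1 : 1 ≤ ‖(x : ℂ)‖ / N := by rw [le_div_iff₀ hNR, one_mul]; exact (hSG x hx).2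
    have h2 : ⌊‖(x : ℂ)‖ / N⌋₊ ≠ 0 := by
      have := (Nat.one_le_floor_iff _).2 h1
      omega
    constructor
    · have h3 := (Nat.le_floor_iff (by positivity)).1 (Nat.pow_log_le_self m h2)
      rw [le_div_iff₀ hNR] at h3
      push_cast at h3
      linarith
    · have h3 := (Nat.floor_lt (by positivity)).1
        (Nat.lt_pow_succ_log_self (show 1 < m by omega) ⌊‖(x : ℂ)‖ / N⌋₊)
      rw [div_lt_iff₀ hNR] at h3
      push_cast at h3
      rw [mul_comm]
      exact h3
  have hgeo : Summable fun j : ℕ => 4 * (m : ℝ) ^ 2 * q ^ j :=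
    (summable_geometric_of_lt_one hq0 hq1).mul_left _
  calc ∑ x ∈ T, _ = ∑ x ∈ S, ‖(x : ℂ)‖ ^ (-2 : ℝ) := by rw [hS, Finset.sum_map]; rfl
    _ = ∑ j ∈ S.image l, ∑ x ∈ S with l x = j, ‖(x : ℂ)‖ ^ (-2 : ℝ) :=
        (Finset.sum_fiberwise_of_maps_to (fun x hx => Finset.mem_image_of_mem l hx) _).symm
    _ ≤ ∑ j ∈ S.image l, 4 * (m : ℝ) ^ 2 * q ^ j := by
        refine Finset.sum_le_sum fun j _ => ?_
        have hcard := shell_count hN10 hGN hk0 hk hm j {x ∈ S | l x = j} (fun x hx => by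
          obtain ⟨h1, rfl⟩ := Finset.mem_filter.1 hx
          exact ⟨(hSG x h1).1, hl x h1⟩)
        have hcard' : (({x ∈ S | l x = j}.card : ℕ) : ℝ)
            ≤ ((m : ℝ) ^ 2 - 1) ^ j * (2 * N * m) ^ 2 := by
          have h1 : 1 ≤ m ^ 2 := Nat.one_le_pow _ _ (by omega)
          have := (Nat.cast_le (α := ℝ)).2 hcard
          push_cast [Nat.cast_sub h1] at this
          exact this
        have hb : ∀ x ∈ S.filter (l · = j), ‖(x : ℂ)‖ ^ (-2 : ℝ) ≤ 1 / (N * (m : ℝ) ^ j) ^ 2 := by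
          intro x hx
          obtain ⟨h1, rfl⟩ := Finset.mem_filter.1 hx
          rw [Real.rpow_neg (norm_nonneg _), Real.rpow_two, ← one_div]
          have := (hl x h1).1
          gcongr
        refine (Finset.sum_le_card_nsmul _ _ _ hb).trans ?_
        rw [nsmul_eq_mul]
        calc _ ≤ ((m : ℝ) ^ 2 - 1) ^ j * (2 * N * m) ^ 2 * (1 / (N * (m : ℝ) ^ j) ^ 2) := by gcongr
          _ = _ := by rw [hq, div_pow]; field_simp; ring
    _ ≤ _ := hgeo.sum_le_tsum _ fun j _ => by positivity

/-! ### The limit set -/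

lemma cfComp_succ (ω : ℕ → ℂ) (m : ℕ) (z : ℂ) :
    cfComp ω (m + 1) z = (ω 0 + cfComp (fun k => ω (k + 1)) m z)⁻¹ := by
  simp [cfComp, List.ofFn_succ]

/-- A constant word converges: for `‖w₀‖ ≥ 3` the map `z ↦ 1 / (w₀ + z)` contracts the unit disk by
the factor `1 / 4`. -/
lemma exists_const_limit {w0 : ℂ} (h : 3 ≤ ‖w0‖) :
    ∃ y : ℂ, ‖y‖ ≤ 1 ∧ Tendsto (fun m => cfComp (fun _ => w0) m 0) atTop (𝓝 y) := by
  set u : ℕ → ℂ := fun m => cfComp (fun _ => w0) m 0 with hu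
  have hrec : ∀ m, u (m + 1) = (w0 + u m)⁻¹ := fun m => cfComp_succ _ _ _
  have hlow : ∀ z : ℂ, ‖z‖ ≤ 1 → 2 ≤ ‖w0 + z‖ := fun z hz => by
    have := norm_sub_le (w0 + z) z
    rw [add_sub_cancel_right] at this
    linarith
  have hle : ∀ m, ‖u m‖ ≤ 1 := by
    intro m
    induction m with
    | zero => simp [hu, cfComp]
    | succ m ih =>
      rw [hrec, norm_inv]
      exact inv_le_one_of_one_le₀ (by linarith [hlow _ ih])
  have hdist : ∀ m, dist (u m) (u (m + 1)) ≤ 1 * (1 / 4 : ℝ) ^ m := by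
    intro m
    induction m with
    | zero => simpa [hu, cfComp] using hle 1
    | succ m ih =>
      have h1 := hlow _ (hle m)
      have h2 := hlow _ (hle (m + 1))
      have hn1 : w0 + u m ≠ 0 := norm_pos_iff.1 (by linarith)
      have hn2 : w0 + u (m + 1) ≠ 0 := norm_pos_iff.1 (by linarith)
      have hstep : u (m + 1) - u (m + 1 + 1) = (w0 + u m)⁻¹ - (w0 + u (m + 1))⁻¹ := by
        rw [hrec (m + 1), hrec m]
      rw [dist_eq_norm, hstep, inv_sub_inv hn1 hn2, add_sub_add_left_eq_sub, norm_div, norm_mul,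
        ← dist_eq_norm, dist_comm, pow_succ, ← mul_assoc, div_le_iff₀ (by positivity)]
      have : (4 : ℝ) ≤ ‖w0 + u m‖ * ‖w0 + u (m + 1)‖ := by nlinarith
      have h0 : (0 : ℝ) ≤ 1 * (1 / 4) ^ m := by positivity
      nlinarith
  obtain ⟨y, hy⟩ := cauchySeq_tendsto_of_complete
    (cauchySeq_of_le_geometric (1 / 4) 1 (by norm_num) hdist)
  exact ⟨y, le_of_tendsto hy.norm (Eventually.of_forall hle), hy⟩

lemma inv_mem_cfLimitSet {I : Set ℂ} {w0 y : ℂ} (hw0 : w0 ∈ I)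
    (hy : Tendsto (fun m => cfComp (fun _ => w0) m 0) atTop (𝓝 y)) {w : ℂ} (hw : w ∈ I)
    (hne : w + y ≠ 0) : (w + y)⁻¹ ∈ cfLimitSet I := by
  refine ⟨fun k => if k = 0 then w else w0, fun k => ?_, ?_⟩
  · dsimp only; split_ifs <;> assumption
  · rw [← tendsto_add_atTop_iff_nat 1]
    simp only [cfComp_succ, if_true, Nat.succ_ne_zero, if_false]
    exact (hy.const_add w).inv₀ hne

/-- A sector of Gaussian primes is large: its sum of reciprocal norms diverges. -/
lemma not_summable_GPsector {a b : ℝ} (ha : -(Real.pi / 2) ≤ a) (hab : a < b)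
    (hb : b ≤ Real.pi / 2) :
    ¬ Summable (({x : GaussianInt | (x : ℂ) ∈ GPsector a b}).indicator
      fun x => ‖(x : ℂ)‖ ^ (-2 : ℝ)) := by
  intro hs
  set θ := (a + b) / 2 with hθ
  have hpi := Real.pi_pos
  set z := exp (θ * I) with hz
  have hz1 : ‖z‖ = 1 := norm_exp_ofReal_mul_I θ
  have hzarg : arg z = θ := by
    rw [hz, arg_exp_mul_I, toIocMod_eq_self]
    constructor <;> linarith
  have hzre : 0 < z.re := by
    rw [hz, exp_ofReal_mul_I_re]
    exact Real.cos_pos_of_mem_Ioo ⟨by linarith, by linarith⟩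
  have hev : ∀ᶠ v in 𝓝 z, arg v ∈ Ioo a b ∧ 0 < v.re := by
    refine ((continuousAt_arg (Or.inl hzre)).eventually (Ioo_mem_nhds ?_ ?_)).and
      (continuous_re.continuousAt.eventually (lt_mem_nhds hzre)) <;> rw [hzarg] <;> linarith
  obtain ⟨ε, hε, hball⟩ := Metric.eventually_nhds_iff.1 hev
  refine not_summable_sector hz1 hε
    (Summable.of_nonneg_of_le (fun x => indicator_nonneg (fun _ _ => by positivity) x)
      (fun x => indicator_le_indicator_of_subset ?_ (fun _ => by positivity) x) hs)
  rintro x ⟨hx, hxz⟩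
  obtain ⟨⟨h1, h2⟩, h3⟩ := hball (y := (x : ℂ) / ‖(x : ℂ)‖) (by rwa [dist_eq_norm])
  have hn : 0 < ‖(x : ℂ)‖ := by
    have := one_le_norm hx.ne_zero
    linarith
  rw [div_eq_inv_mul, ← ofReal_inv] at h1 h2 h3
  rw [arg_real_mul _ (inv_pos.2 hn)] at h1 h2
  rw [re_ofReal_mul, ← GaussianInt.intCast_re] at h3
  have h4 : (0 : ℝ) < x.re := pos_of_mul_pos_right h3 (by positivity)
  have h5 : 0 < x.re := by exact_mod_cast h4
  exact ⟨x.re, x.im, h5, rfl, hx, h1.le, h2⟩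

lemma not_porous_aux {a b : ℝ} (ha : -(Real.pi / 2) ≤ a) (hab : a < b)
    (hb : b ≤ Real.pi / 2) {I : Set ℂ} (hI : I ⊆ GPsector a b) (hco : (GPsector a b \ I).Finite)
    {J : Set ℂ} (hJ : cfLimitSet I ⊆ J) : ¬ Porous J := by
  intro hp
  set G : Set GaussianInt := {x | (x : ℂ) ∈ I} with hG
  have hinj : Function.Injective fun x : GaussianInt => (x : ℂ) := fun x y h =>
    GaussianInt.toComplex_inj.1 h
  have hGs : ¬ Summable (G.indicator fun x => ‖(x : ℂ)‖ ^ (-2 : ℝ)) := fun h =>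
    not_summable_GPsector ha hab hb
      (summable_indicator_congr (B := G) (hco.preimage (f := fun x : GaussianInt => (x : ℂ)) hinj.injOn) (fun x hx => hI hx) h)
  obtain ⟨w0, hw0, hw03⟩ : ∃ w0 ∈ I, 3 ≤ ‖w0‖ := by
    by_contra! hcon
    refine hGs (summable_of_hasFiniteSupport (((finite_norm_lt 3).subset fun x hx => ?_).subset
      (support_indicator_subset (s := G))))
    simpa using hcon _ hx
  obtain ⟨y, hy1, hy⟩ := exists_const_limit hw03
  obtain ⟨c, H, hc, -, hh⟩ := hasHoles_of_porous (G := G) hy1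
    (fun w hw hne => hJ (inv_mem_cfLimitSet hw0 hy hw hne)) hp
  exact hGs (summable_of_hasHoles hc hh)

end GaussCF

/-- Let `−π/2 ≤ a < b ≤ π/2`. If `I` is a co-finite subset of the
Gaussian prime sector `GP_{a,b}`, then the closure of the limit set `J_I` is not porous
in `ℂ`; in particular `J_I` itself is not porous. -/
theorem stmt17 (a b : ℝ) (ha : -(Real.pi / 2) ≤ a) (hab : a < b) (hb : b ≤ Real.pi / 2)
    (I : Set ℂ) (hI : I ⊆ GPsector a b) (hco : (GPsector a b \ I).Finite) :
    ¬ Porous (closure (cfLimitSet I)) ∧ ¬ Porous (cfLimitSet I) :=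
  ⟨GaussCF.not_porous_aux ha hab hb hI hco subset_closure,
    GaussCF.not_porous_aux ha hab hb hI hco subset_rfl⟩
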